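/- arXiv:2103.08027 — 2 statements merged into one kernel-verified Lean document; each statement's English description precedes it below -/
import Mathlib

section
/- Extended generalized Faulhaber formula, balanced case: Let m = m₁ + i m₂ ∈ ℂ with m ≠ −1 and m₁ = Re(m) ≥ −1, and let x ∈ ℝ with x > 0. Set a = ⌊m₁ + 1⌋. Then the series ∑_{k=1}^{∞} (−1)^k (∑_{l=1}^{k} C(m+1, l+a) S_k^{(1)}(l) B_{l+a}({x})) / ((x+1)(x+2)⋯(x+k)) converges absolutely, and ∑_{k=1}^{⌊x⌋} k^m = x^{m+1}/(m+1) + ζ(−m) + (1/(m+1)) ∑_{k=1}^{a} (−1)^k C(m+1, k) B_k({x}) x^{m−k+1} + (−1)^a (x^{m−a+1}/(m+1)) ∑_{k=1}^{∞} (−1)^k (∑_{l=1}^{k} C(m+1, l+a) S_k^{(1)}(l) B_{l+a}({x})) / ((x+1)(x+2)⋯(x+k)). -/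
open Finset in
/-- Unsigned Stirling numbers of the first kind, via the rising-factorial recurrence:
`z(z+1)⋯(z+k−1) = ∑ l, stirling1Unsigned k l * z^l`. -/
def stirling1Unsigned : ℕ → ℕ → ℕ
  | 0, 0 => 1
  | 0, _ + 1 => 0
  | k + 1, 0 => k * stirling1Unsigned k 0
  | k + 1, l + 1 => stirling1Unsigned k l + k * stirling1Unsigned k (l + 1)

/-- The Stirling numbers of the first kind `S_k^{(1)}(l)` of the paper, defined by
`z(z+1)⋯(z+k−1) = (−1)^k ∑_{l=0}^k (−1)^l S_k^{(1)}(l) z^l`, i.e.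
`S_k^{(1)}(l) = (−1)^{k−l}` times the coefficient of `z^l` in the rising factorial. -/
def S1 (k l : ℕ) : ℤ := (-1) ^ (k + l) * stirling1Unsigned k l

/-- The `n`-th Bernoulli polynomial `B_n(x) = ∑_{k=0}^n C(n,k) B_k x^{n−k}`,
with `B_1 = −1/2`. -/
noncomputable def bernPoly (n : ℕ) (x : ℝ) : ℝ :=
  ∑ k ∈ Finset.range (n + 1), (n.choose k : ℝ) * (bernoulli k : ℝ) * x ^ (n - k)

/-- The generalized binomial coefficient `C(w,k) = w(w−1)⋯(w−k+1)/k!`. -/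
noncomputable def cchoose (w : ℂ) (k : ℕ) : ℂ :=
  (∏ i ∈ Finset.range k, (w - i)) / (k.factorial : ℂ)

/-- The rising product `(z+1)(z+2)⋯(z+k)`. -/
noncomputable def risingProd (z : ℂ) (k : ℕ) : ℂ :=
  ∏ i ∈ Finset.range k, (z + i + 1)

/-- The rising product `(x+1)(x+2)⋯(x+k)` over the reals. -/
noncomputable def risingProdR (x : ℝ) (k : ℕ) : ℝ :=
  ∏ i ∈ Finset.range k, (x + i + 1)

/-- The digamma function `ψ(z) = Γ′(z)/Γ(z)`. -/
noncomputable def digamma (z : ℂ) : ℂ := deriv Complex.Gamma z / Complex.Gamma z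

open Complex in
noncomputable def PP (w : ℂ) (k : ℕ) : ℂ := ∏ i ∈ Finset.range k, (1 + w / ((i : ℂ) + 1))

lemma sinh_le_mul_exp {y : ℝ} (hy : 0 ≤ y) : Real.sinh y ≤ y * Real.exp y := by
  rw [Real.sinh_eq]
  have h1 : 1 - 2 * y ≤ Real.exp (-2 * y) := by
    have := Real.add_one_le_exp (-2 * y); linarith
  have h2 : Real.exp (-y) = Real.exp y * Real.exp (-2 * y) := by
    rw [← Real.exp_add]; congr 1; ring
  have := Real.exp_pos y
  nlinarith

lemma prod_le_exp (β : ℝ) (k : ℕ) :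
    ∏ i ∈ Finset.range k, (1 + β ^ 2 / ((i : ℝ) + 1) ^ 2) ≤ Real.exp (Real.pi * |β|) := by
  rcases eq_or_ne β 0 with rfl | hβ
  · simp
  have hb : 0 < |β| := abs_pos.mpr hβ
  have hmono : Monotone (fun k : ℕ => ∏ i ∈ Finset.range k, (1 + β ^ 2 / ((i : ℝ) + 1) ^ 2)) := by
    refine monotone_nat_of_le_succ fun n => ?_
    rw [Finset.prod_range_succ]
    refine le_mul_of_one_le_right (Finset.prod_nonneg fun i _ => by positivity) ?_
    have : 0 ≤ β ^ 2 / ((n : ℝ) + 1) ^ 2 := by positivity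
    linarith
  have h := (Complex.tendsto_euler_sin_prod ((|β| : ℝ) * Complex.I)).norm
  have h1 : ∀ n : ℕ, ‖(Real.pi : ℂ) * (((|β| : ℝ) : ℂ) * Complex.I) * ∏ j ∈ Finset.range n,
      ((1 : ℂ) - (((|β| : ℝ) : ℂ) * Complex.I) ^ 2 / ((j : ℂ) + 1) ^ 2)‖ =
      Real.pi * |β| * ∏ i ∈ Finset.range n, (1 + β ^ 2 / ((i : ℝ) + 1) ^ 2) := by
    intro n
    have : ∏ j ∈ Finset.range n,
      ((1 : ℂ) - (((|β| : ℝ) : ℂ) * Complex.I) ^ 2 / ((j : ℂ) + 1) ^ 2) =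
      ((∏ i ∈ Finset.range n, (1 + β ^ 2 / ((i : ℝ) + 1) ^ 2) : ℝ) : ℂ) := by
      push_cast
      refine Finset.prod_congr rfl fun j _ => ?_
      rw [mul_pow, Complex.I_sq, ← Complex.ofReal_pow, sq_abs]
      push_cast; ring
    rw [this, norm_mul, norm_mul, norm_mul, Complex.norm_I, Complex.norm_real, Complex.norm_real,
      Complex.norm_real, Real.norm_of_nonneg Real.pi_pos.le, Real.norm_of_nonneg hb.le,
      Real.norm_of_nonneg (Finset.prod_nonneg fun i _ => by positivity)]
    ring
  simp_rw [h1] at h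
  have h2 : ‖Complex.sin (Real.pi * (((|β| : ℝ) : ℂ) * Complex.I))‖ = Real.sinh (Real.pi * |β|) := by
    rw [← mul_assoc, Complex.sin_mul_I, norm_mul, Complex.norm_I, mul_one, ← Complex.ofReal_mul,
      ← Complex.ofReal_sinh, Complex.norm_real, Real.norm_of_nonneg]
    exact Real.sinh_nonneg_iff.mpr (by positivity)
  rw [h2] at h
  have h3 : Real.pi * |β| * ∏ i ∈ Finset.range k, (1 + β ^ 2 / ((i : ℝ) + 1) ^ 2) ≤
      Real.sinh (Real.pi * |β|) :=
    Monotone.ge_of_tendsto (f := fun n : ℕ => Real.pi * |β| * ∏ i ∈ Finset.range n,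
      (1 + β ^ 2 / ((i : ℝ) + 1) ^ 2))
      (fun a b hab => mul_le_mul_of_nonneg_left (hmono hab) (by positivity)) h k
  have h4 := h3.trans (sinh_le_mul_exp (y := Real.pi * |β|) (by positivity))
  exact le_of_mul_le_mul_left h4 (by positivity)

lemma PP_bound (β : ℝ) (k : ℕ) : ‖PP (β * Complex.I) k‖ ≤ Real.exp (Real.pi * |β|) := by
  refine le_trans ?_ (prod_le_exp β k)
  rw [PP, norm_prod]
  refine Finset.prod_le_prod (fun _ _ => norm_nonneg _) fun i _ => ?_
  have h1 : (1 : ℂ) + β * Complex.I / ((i : ℂ) + 1) =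
      ((1 : ℝ) : ℂ) + ((β / ((i : ℝ) + 1) : ℝ) : ℂ) * Complex.I := by push_cast; ring
  rw [h1, Complex.norm_add_mul_I, ← div_pow]
  have h0 := sq_nonneg (β / ((i : ℝ) + 1))
  rw [Real.sqrt_le_left (by positivity)]
  nlinarith

lemma PP_sub_one_bound (β : ℝ) (k : ℕ) : ‖PP (β * Complex.I) k - 1‖ ≤
    |β| * Real.exp (Real.pi * |β|) * ∑ i ∈ Finset.range k, 1 / ((i : ℝ) + 1) := by
  induction k with
  | zero => simp [PP]
  | succ k ih =>
    have h1 : PP (β * Complex.I) (k + 1) - 1 = (PP (β * Complex.I) k - 1) +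
        PP (β * Complex.I) k * (β * Complex.I / ((k : ℂ) + 1)) := by
      rw [PP, Finset.prod_range_succ, ← PP]; ring
    have h2 : ‖(β : ℂ) * Complex.I / ((k : ℂ) + 1)‖ = |β| * (1 / ((k : ℝ) + 1)) := by
      rw [norm_div, norm_mul, Complex.norm_I, Complex.norm_real, Real.norm_eq_abs]
      have : ‖(k : ℂ) + 1‖ = (k : ℝ) + 1 := by
        rw [← Nat.cast_succ, Complex.norm_natCast]; simp
      rw [this]; ring
    rw [h1, Finset.sum_range_succ]
    refine (norm_add_le _ _).trans ?_
    rw [norm_mul, h2, mul_add]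
    have := mul_le_mul_of_nonneg_right (PP_bound β k)
      (by positivity : 0 ≤ |β| * (1 / ((k : ℝ) + 1)))
    linarith

/-- q_N -/
noncomputable def qq (x : ℝ) (k : ℕ) : ℝ := (k.factorial : ℝ) / risingProdR x k

lemma rpos {x : ℝ} (hx : 0 < x) (k : ℕ) : 0 < risingProdR x k :=
  Finset.prod_pos fun i _ => by positivity

lemma qq_pos {x : ℝ} (hx : 0 < x) (k : ℕ) : 0 < qq x k :=
  div_pos (by positivity) (rpos hx k)

lemma qq_succ {x : ℝ} (hx : 0 < x) (k : ℕ) : qq x (k + 1) = qq x k * ((k + 1) / (x + k + 1)) := by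
  have := (rpos hx k).ne'
  rw [qq, qq, risingProdR, Finset.prod_range_succ, ← risingProdR, Nat.factorial_succ]
  have : x + k + 1 ≠ 0 := by positivity
  push_cast; field_simp

noncomputable def HH (k : ℕ) : ℝ := ∑ i ∈ Finset.range k, 1 / ((i : ℝ) + 1)

lemma HH_nonneg (k : ℕ) : 0 ≤ HH k := Finset.sum_nonneg fun i _ => by positivity

lemma qq_HH {y : ℝ} (hy : 0 < y) (k : ℕ) : (1 + y * HH k) * qq y k ≤ 1 := by
  induction k with
  | zero => simp [HH, qq, risingProdR]
  | succ k ih =>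
    have hq := qq_pos hy k
    have hH := HH_nonneg k
    have h1 : HH (k + 1) = HH k + 1 / ((k : ℝ) + 1) := by rw [HH, Finset.sum_range_succ, ← HH]
    rw [h1, qq_succ hy]
    refine le_trans ?_ ih
    have : (1 + y * (HH k + 1 / ((k : ℝ) + 1))) * (qq y k * ((k + 1) / (y + k + 1))) =
      qq y k * ((1 + y * HH k) * (k + 1) + y) / (y + k + 1) := by field_simp; ring
    rw [this, div_le_iff₀ (by positivity)]
    have : 0 ≤ qq y k * (y * (y * HH k)) := by positivity
    nlinarith

lemma qq_tendsto {x : ℝ} (hx : 0 < x) : Filter.Tendsto (qq x) Filter.atTop (nhds 0) := by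
  have h1 : Filter.Tendsto (fun k => 1 + x * HH k) Filter.atTop Filter.atTop := by
    refine Filter.tendsto_atTop_add_const_left _ _ (Filter.Tendsto.const_mul_atTop hx ?_)
    exact Real.tendsto_sum_range_one_div_nat_succ_atTop
  refine squeeze_zero (fun k => (qq_pos hx k).le) (fun k => ?_) h1.inv_tendsto_atTop
  have := HH_nonneg k
  rw [Pi.inv_apply, ← one_div, le_div_iff₀ (by positivity), mul_comm]
  exact qq_HH hx k

lemma summable_qq {x : ℝ} (hx : 0 < x) : Summable fun k : ℕ => qq x k / (x + k + 1) := by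
  refine summable_of_sum_range_le (c := 1 / x)
    (fun k => div_nonneg (qq_pos hx k).le (by positivity)) fun n => ?_
  have h : ∀ n, ∑ i ∈ Finset.range n, qq x i / (x + i + 1) = (1 - qq x n) / x := by
    intro n
    induction n with
    | zero => simp [qq, risingProdR]
    | succ n ih =>
      rw [Finset.sum_range_succ, ih, qq_succ hx]
      have : x + n + 1 ≠ 0 := by positivity
      field_simp
      ring
  rw [h]
  have := qq_pos hx n
  gcongr; linarith

lemma summable_hh {x : ℝ} (hx : 0 < x) : Summable fun k : ℕ => qq x k * HH k / (x + k + 1) := by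
  set y := x / 2 with hy
  have hy0 : 0 < y := by positivity
  have hr : Summable fun k : ℕ => qq x k / qq y k / (x + k + 1) := by
    refine summable_of_sum_range_le (c := 1 / (x - y))
      (fun k => div_nonneg (div_pos (qq_pos hx k) (qq_pos hy0 k)).le (by positivity)) fun n => ?_
    have h : ∀ n, ∑ i ∈ Finset.range n, qq x i / qq y i / (x + i + 1) =
        (1 - qq x n / qq y n) / (x - y) := by
      intro n
      induction n with
      | zero => simp [qq, risingProdR]
      | succ n ih =>
        rw [Finset.sum_range_succ, ih, qq_succ hx, qq_succ hy0]
        have : x + n + 1 ≠ 0 := by positivity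
        have : y + n + 1 ≠ 0 := by positivity
        have := (qq_pos hy0 n).ne'
        have : x - y ≠ 0 := by rw [hy]; linarith
        field_simp
        ring
    rw [h]
    have := div_pos (qq_pos hx n) (qq_pos hy0 n)
    have h5 : 0 < x - y := by rw [hy]; linarith
    gcongr; linarith
  refine Summable.of_nonneg_of_le (fun k => ?_) (fun k => ?_) (hr.mul_left (1 / y))
  · have := (qq_pos hx k).le
    have := HH_nonneg k
    positivity
  · have h1 := qq_HH hy0 k
    have h2 := qq_pos hy0 k
    have h3 := qq_pos hx k
    have h4 : HH k ≤ 1 / y * (1 / qq y k) := by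
      rw [one_div_mul_one_div, le_div_iff₀ (by positivity)]
      nlinarith
    calc qq x k * HH k / (x + k + 1) ≤ qq x k * (1 / y * (1 / qq y k)) / (x + k + 1) := by gcongr
      _ = _ := by ring

lemma hasSum_PP {x : ℝ} (hx : 0 < x) (β : ℝ) :
    HasSum (fun k : ℕ => ((qq x k / (x + k + 1) : ℝ) : ℂ) * PP (β * Complex.I) k)
      (1 / (x - β * Complex.I)) := by
  have hne : (x : ℂ) - β * Complex.I ≠ 0 := by
    intro h
    have := congrArg Complex.re h
    simp at this
    exact hx.ne' this
  have hs : Summable (fun k : ℕ => ((qq x k / (x + k + 1) : ℝ) : ℂ) * PP (β * Complex.I) k) := by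
    refine Summable.of_norm_bounded ((summable_qq hx).mul_right (Real.exp (Real.pi * |β|)))
      fun k => ?_
    have h0 := qq_pos hx k
    rw [norm_mul, Complex.norm_real, Real.norm_of_nonneg (by positivity)]
    exact mul_le_mul_of_nonneg_left (PP_bound β k) (by positivity)
  have h : ∀ n, ∑ k ∈ Finset.range n, ((qq x k / (x + k + 1) : ℝ) : ℂ) * PP (β * Complex.I) k =
      (1 - qq x n * PP (β * Complex.I) n) / (x - β * Complex.I) := by
    intro n
    induction n with
    | zero => simp [qq, risingProdR, PP]
    | succ n ih =>
      rw [Finset.sum_range_succ, ih, qq_succ hx, show PP (β * Complex.I) (n + 1) =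
        PP (β * Complex.I) n * (1 + β * Complex.I / ((n : ℂ) + 1)) from Finset.prod_range_succ _ _]
      have h1 : (x : ℂ) + n + 1 ≠ 0 := by
        have : x + n + 1 ≠ 0 := by positivity
        exact_mod_cast this
      have h2 : (n : ℂ) + 1 ≠ 0 := by exact_mod_cast Nat.succ_ne_zero n
      push_cast
      field_simp
      ring
  have ht : Filter.Tendsto (fun n : ℕ => (qq x n : ℂ) * PP (β * Complex.I) n) Filter.atTop
      (nhds 0) := by
    rw [tendsto_zero_iff_norm_tendsto_zero]
    have := (qq_tendsto hx).mul_const (Real.exp (Real.pi * |β|))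
    rw [zero_mul] at this
    refine squeeze_zero (fun _ => norm_nonneg _) (fun k => ?_) this
    have h0 := qq_pos hx k
    rw [norm_mul, Complex.norm_real, Real.norm_of_nonneg h0.le]
    exact mul_le_mul_of_nonneg_left (PP_bound β k) h0.le
  have ht2 : Filter.Tendsto (fun n : ℕ => (1 - qq x n * PP (β * Complex.I) n) /
      (x - β * Complex.I)) Filter.atTop (nhds ((1 - 0) / (x - β * Complex.I))) :=
    (tendsto_const_nhds.sub ht).div_const _
  rw [sub_zero] at ht2
  have h3 := hs.hasSum.tendsto_sum_nat
  simp_rw [h] at h3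
  rw [← tendsto_nhds_unique h3 ht2]
  exact hs.hasSum

lemma stir_zero_of_lt : ∀ (k l : ℕ), k < l → stirling1Unsigned k l = 0
  | 0, 0, h => absurd h (by omega)
  | 0, _ + 1, _ => by simp [stirling1Unsigned]
  | k + 1, 0, h => absurd h (by omega)
  | k + 1, l + 1, h => by
    rw [stirling1Unsigned, stir_zero_of_lt k l (by omega), stir_zero_of_lt k (l + 1) (by omega)]
    simp

lemma stir_succ_zero (k : ℕ) : stirling1Unsigned (k + 1) 0 = 0 := by
  induction k with
  | zero => simp [stirling1Unsigned]
  | succ k ih => rw [stirling1Unsigned, ih]; simp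

lemma stir_succ_one (k : ℕ) : stirling1Unsigned (k + 1) 1 = k.factorial := by
  induction k with
  | zero => simp [stirling1Unsigned]
  | succ k ih => rw [stirling1Unsigned, ih, stir_succ_zero, Nat.factorial_succ]; simp

lemma stir_prod (w : ℂ) (k : ℕ) : ∏ i ∈ Finset.range k, (w + i) =
    ∑ l ∈ Finset.range (k + 1), (stirling1Unsigned k l : ℂ) * w ^ l := by
  induction k with
  | zero => simp [stirling1Unsigned]
  | succ k ih =>
    rw [Finset.prod_range_succ, ih, Finset.sum_range_succ' _ (k + 1)]
    simp only [stirling1Unsigned]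
    have h1 : ∑ l ∈ Finset.range (k + 1), (stirling1Unsigned k (l + 1) : ℂ) * w ^ (l + 1)
        + (stirling1Unsigned k 0 : ℂ) * w ^ 0 =
        ∑ l ∈ Finset.range (k + 1), (stirling1Unsigned k l : ℂ) * w ^ l := by
      rw [← Finset.sum_range_succ' (fun l => (stirling1Unsigned k l : ℂ) * w ^ l),
        Finset.sum_range_succ, stir_zero_of_lt k (k + 1) (by omega)]
      simp
    have h2 : ∑ l ∈ Finset.range (k + 1),
        ((stirling1Unsigned k l + k * stirling1Unsigned k (l + 1) : ℕ) : ℂ) * w ^ (l + 1) =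
        w * ∑ l ∈ Finset.range (k + 1), (stirling1Unsigned k l : ℂ) * w ^ l +
        k * ∑ l ∈ Finset.range (k + 1), (stirling1Unsigned k (l + 1) : ℂ) * w ^ (l + 1) := by
      rw [Finset.mul_sum, Finset.mul_sum, ← Finset.sum_add_distrib]
      refine Finset.sum_congr rfl fun l _ => ?_
      push_cast; ring
    rw [h2, ← h1]
    push_cast; ring

noncomputable def DD (k : ℕ) (w : ℂ) : ℂ :=
  ∑ i ∈ Finset.range k, (stirling1Unsigned (k + 1) (i + 2) : ℂ) * w ^ i

lemma prod_eq_PP (w : ℂ) (k : ℕ) :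
    ∏ i ∈ Finset.range (k + 1), (w + i) = w * (k.factorial * PP w k) := by
  rw [Finset.prod_range_succ']
  have : ∏ i ∈ Finset.range k, (w + ((i + 1 : ℕ) : ℂ)) = k.factorial * PP w k := by
    induction k with
    | zero => simp [PP]
    | succ k ih =>
      rw [Finset.prod_range_succ, ih, PP, PP, Finset.prod_range_succ, Nat.factorial_succ]
      have h2 : (k : ℂ) + 1 ≠ 0 := by exact_mod_cast Nat.succ_ne_zero k
      push_cast; field_simp; ring
  rw [this]; push_cast; ring

lemma DD_eq {w : ℂ} (hw : w ≠ 0) (k : ℕ) : DD k w = k.factorial * (PP w k - 1) / w := by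
  have h1 := stir_prod w (k + 1)
  rw [prod_eq_PP, Finset.sum_range_succ', Finset.sum_range_succ'] at h1
  simp only [zero_add, stir_succ_zero, stir_succ_one] at h1
  have h2 : ∑ l ∈ Finset.range k, (stirling1Unsigned (k + 1) (l + 1 + 1) : ℂ) * w ^ (l + 1 + 1) =
      w ^ 2 * DD k w := by
    rw [DD, Finset.mul_sum]
    refine Finset.sum_congr rfl fun l _ => ?_
    ring
  rw [h2] at h1
  rw [eq_div_iff hw]
  apply mul_left_cancel₀ hw
  push_cast at h1
  linear_combination -h1

lemma rp_eq {x : ℝ} (k : ℕ) : risingProd (x : ℂ) k = (risingProdR x k : ℝ) := by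
  rw [risingProd, risingProdR]; push_cast; rfl

lemma rp_ne {x : ℝ} (hx : 0 < x) (k : ℕ) : risingProd (x : ℂ) k ≠ 0 := by
  rw [rp_eq]; exact_mod_cast (rpos hx k).ne'

lemma fact_div_rp {x : ℝ} (k : ℕ) :
    (k.factorial : ℂ) / risingProd (x : ℂ) (k + 1) = ((qq x k / (x + k + 1) : ℝ) : ℂ) := by
  rw [rp_eq, qq, risingProdR, Finset.prod_range_succ, ← risingProdR]
  push_cast
  rw [div_div]

lemma DD_div {x : ℝ} {w : ℂ} (hw : w ≠ 0) (k : ℕ) : DD k w / risingProd (x : ℂ) (k + 1) =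
    ((qq x k / (x + k + 1) : ℝ) : ℂ) * (PP w k - 1) / w := by
  rw [← fact_div_rp, DD_eq hw]; ring

lemma DD_hasSum {x : ℝ} (hx : 0 < x) {β : ℝ} (hβ : β ≠ 0) :
    HasSum (fun k => DD k (β * Complex.I) / risingProd (x : ℂ) (k + 1))
      (1 / (x * (x - β * Complex.I))) := by
  have hw : (β : ℂ) * Complex.I ≠ 0 := by simp [hβ]
  have h1 := hasSum_PP hx β
  have h0 := hasSum_PP hx 0
  have hP0 : ∀ k, PP (((0 : ℝ) : ℂ) * Complex.I) k = 1 := by intro k; simp [PP]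
  simp_rw [hP0] at h0
  have h2 := (h1.sub h0).div_const ((β : ℂ) * Complex.I)
  have hne : (x : ℂ) - β * Complex.I ≠ 0 := by
    intro h
    have := congrArg Complex.re h
    simp at this
    exact hx.ne' this
  have hxc : (x : ℂ) ≠ 0 := by exact_mod_cast hx.ne'
  convert! h2 using 1
  · funext k
    rw [DD_div hw]; ring
  · rw [Complex.ofReal_zero, zero_mul, sub_zero]
    generalize (β : ℂ) * Complex.I = w at hw hne
    field_simp
    ring

lemma DD_bound {x : ℝ} (hx : 0 < x) {β : ℝ} (hβ : β ≠ 0) (k : ℕ) :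
    ‖DD k (β * Complex.I) / risingProd (x : ℂ) (k + 1)‖ ≤
      Real.exp (Real.pi * |β|) * (qq x k * HH k / (x + k + 1)) := by
  have hw : (β : ℂ) * Complex.I ≠ 0 := by simp [hβ]
  have hb : 0 < |β| := abs_pos.mpr hβ
  have hq := qq_pos hx k
  rw [DD_div hw, norm_div, norm_mul, Complex.norm_real, norm_mul, Complex.norm_I, Complex.norm_real,
    Real.norm_of_nonneg (by positivity), Real.norm_eq_abs, mul_one, div_le_iff₀ hb]
  calc _ ≤ qq x k / (x + k + 1) * (|β| * Real.exp (Real.pi * |β|) * HH k) :=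
        mul_le_mul_of_nonneg_left (PP_sub_one_bound β k) (by positivity)
    _ = _ := by ring


noncomputable def zz (j : ℤ) : ℂ := 1 / (2 * Real.pi * Complex.I * j)

lemma zz_zero : zz 0 = 0 := by simp [zz]

lemma zz_eq (j : ℤ) : zz j = ((-(1 / (2 * Real.pi * j)) : ℝ) : ℂ) * Complex.I := by
  rw [zz]
  push_cast
  rw [one_div, one_div, mul_right_comm, mul_inv _ Complex.I, Complex.inv_I]
  ring

lemma zz_norm (j : ℤ) : ‖zz j‖ = 1 / (2 * Real.pi * |(j : ℝ)|) := by
  rw [zz_eq, norm_mul, Complex.norm_I, Complex.norm_real, mul_one, norm_neg, Real.norm_eq_abs,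
    abs_div, abs_mul, abs_one, abs_of_pos Real.two_pi_pos]

lemma zz_norm_le (j : ℤ) : ‖zz j‖ ≤ 1 / (2 * Real.pi) := by
  rw [zz_norm]
  rcases eq_or_ne j 0 with rfl | hj
  · simp; positivity
  · have : (1 : ℝ) ≤ |(j : ℝ)| := by exact_mod_cast Int.one_le_abs hj
    have hp := Real.pi_pos
    exact one_div_le_one_div_of_le (by positivity) (by nlinarith)

lemma zz_norm_le_one (j : ℤ) : ‖zz j‖ ≤ 1 := by
  refine (zz_norm_le j).trans ?_
  have := Real.pi_gt_three
  rw [div_le_one (by positivity)]; linarith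

lemma zz_summable : Summable fun j : ℤ => ‖zz j‖ ^ 2 := by
  have := (Real.summable_one_div_int_pow (p := 2)).mpr (by norm_num)
  refine (this.mul_left ((1 / (2 * Real.pi)) ^ 2)).congr fun j => ?_
  rw [zz_norm, div_pow, div_pow, mul_pow _ |(j : ℝ)|, sq_abs]
  rw [div_mul_div_comm]; simp

lemma zz_pow_le (j : ℤ) {n : ℕ} (hn : 2 ≤ n) : ‖zz j ^ n‖ ≤ ‖zz j‖ ^ 2 := by
  rw [norm_pow]
  exact pow_le_pow_of_le_one (norm_nonneg _) (zz_norm_le_one j) hn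

lemma bernPoly_eq (n : ℕ) (x : ℝ) : bernPoly n x = bernoulliFun n x := by
  rw [bernPoly, bernoulliFun, Polynomial.bernoulli, Polynomial.eval_map, Polynomial.eval₂_finsetSum]
  refine Finset.sum_congr rfl fun i _ => ?_
  rw [Polynomial.eval₂_monomial]
  simp [mul_comm]

noncomputable def bb (θ : ℝ) (n : ℕ) : ℂ := (bernPoly n θ : ℂ) / (n.factorial : ℂ)

noncomputable def ee (θ : ℝ) (j : ℤ) : ℂ := fourier j (θ : AddCircle (1 : ℝ))

lemma ee_norm (θ : ℝ) (j : ℤ) : ‖ee θ j‖ = 1 := by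
  rw [ee, fourier_apply]
  exact Circle.norm_coe _

lemma hasSum_zz {θ : ℝ} (hθ : θ ∈ Set.Icc (0 : ℝ) 1) {n : ℕ} (hn : 2 ≤ n) :
    HasSum (fun j => ee θ j * zz j ^ n) (-bb θ n) := by
  have h := (hasSum_one_div_pow_mul_fourier_mul_bernoulliFun hn hθ).mul_left
    (1 / (2 * Real.pi * Complex.I) ^ n)
  convert! h using 1
  · funext j
    rw [ee, zz, div_pow, mul_pow _ (j : ℂ)]
    simp only [one_pow, one_div, mul_inv]
    ring
  · rw [bb, bernPoly_eq]
    have : (2 * Real.pi * Complex.I : ℂ) ^ n ≠ 0 := pow_ne_zero _ Complex.two_pi_I_ne_zero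
    have h2 : (n.factorial : ℂ) ≠ 0 := by exact_mod_cast n.factorial_ne_zero
    field_simp

lemma norm_one_sub_ge (v : ℝ) (j : ℤ) : 1 ≤ ‖1 - v * zz j‖ := by
  have : (1 - v * zz j).re = 1 := by rw [zz_eq]; simp
  calc (1 : ℝ) = |(1 - v * zz j).re| := by rw [this]; simp
    _ ≤ _ := Complex.abs_re_le_norm _

lemma one_sub_ne (v : ℝ) (j : ℤ) : 1 - v * zz j ≠ 0 := by
  intro h
  have := norm_one_sub_ge v j
  rw [h] at this; simp at this; linarith

noncomputable def FF (θ : ℝ) (n : ℕ) (v : ℝ) : ℂ := ∑' j : ℤ, ee θ j * zz j ^ n / (1 - v * zz j)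

lemma FF_bd (θ : ℝ) {n : ℕ} (hn : 2 ≤ n) (v : ℝ) (j : ℤ) :
    ‖ee θ j * zz j ^ n / (1 - v * zz j)‖ ≤ ‖zz j‖ ^ 2 := by
  rw [norm_div, norm_mul, ee_norm, one_mul]
  exact (div_le_self (norm_nonneg _) (norm_one_sub_ge v j)).trans (zz_pow_le j hn)

lemma FF_summable (θ : ℝ) {n : ℕ} (hn : 2 ≤ n) (v : ℝ) :
    Summable fun j : ℤ => ee θ j * zz j ^ n / (1 - v * zz j) :=
  Summable.of_norm_bounded zz_summable (FF_bd θ hn v)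

noncomputable def CC : ℝ := ∑' j : ℤ, ‖zz j‖ ^ 2

lemma FF_norm (θ : ℝ) {n : ℕ} (hn : 2 ≤ n) (v : ℝ) : ‖FF θ n v‖ ≤ CC :=
  tsum_of_norm_bounded zz_summable.hasSum (FF_bd θ hn v)

lemma FF_rec {θ : ℝ} (hθ : θ ∈ Set.Icc (0 : ℝ) 1) {n : ℕ} (hn : 2 ≤ n) (v : ℝ) :
    FF θ n v = -bb θ n + v * FF θ (n + 1) v := by
  rw [← (hasSum_zz hθ hn).tsum_eq, FF, FF, ← tsum_mul_left,
    ← (hasSum_zz hθ hn).summable.tsum_add ((FF_summable θ (by omega) v).mul_left _)]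
  refine tsum_congr fun j => ?_
  have := one_sub_ne v j
  field_simp
  ring

/-- base function -/
noncomputable def gg (v : ℝ) (θ : ℝ) : ℂ :=
  ((v * Real.exp (θ * v) / (Real.exp v - 1) - 1 - v * bernoulliFun 1 θ : ℝ) : ℂ)

lemma gg_deriv (v : ℝ) (θ : ℝ) :
    HasDerivAt (gg v) (v * gg v θ + v ^ 2 * (bernoulliFun 1 θ : ℂ)) θ := by
  have h : HasDerivAt (fun θ : ℝ => v * Real.exp (θ * v) / (Real.exp v - 1) - 1 -
      v * bernoulliFun 1 θ) (v * (Real.exp (θ * v) * v) / (Real.exp v - 1) - v * 1) θ := by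
    refine HasDerivAt.sub (HasDerivAt.sub_const _ ((HasDerivAt.const_mul _ ?_).div_const _)) ?_
    · simpa using ((hasDerivAt_id θ).mul_const v).exp
    · have := (hasDerivAt_bernoulliFun 1 θ).const_mul v
      simpa using this
  convert! h.ofReal_comp using 1
  rw [gg]; push_cast; ring

lemma gg_cont (v : ℝ) : Continuous (gg v) := 
  continuous_iff_continuousAt.mpr fun θ => (gg_deriv v θ).continuousAt

lemma gg_ends {v : ℝ} (hv : 0 < v) : gg v 0 = gg v 1 := by
  have : Real.exp v - 1 ≠ 0 := by have := Real.add_one_lt_exp hv.ne'; linarith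
  rw [gg, gg]
  congr 1
  simp
  field_simp
  ring

lemma gg_coeff {v : ℝ} (hv : 0 < v) (j : ℤ) :
    fourierCoeffOn zero_lt_one (gg v) j = -(v ^ 2 : ℂ) * (zz j ^ 2 / (1 - v * zz j)) := by
  have hi1 : IntervalIntegrable (fun θ : ℝ => fourier (-j) (θ : AddCircle ((1 : ℝ) - 0)) •
      ((v : ℂ) * gg v θ)) MeasureTheory.volume 0 1 := by
    apply Continuous.intervalIntegrable
    have := gg_cont v
    have h2 : Continuous fun θ : ℝ => fourier (-j) (θ : AddCircle ((1 : ℝ) - 0)) :=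
      (map_continuous (fourier (-j))).comp (AddCircle.continuous_mk' _)
    fun_prop
  have hi2 : IntervalIntegrable (fun θ : ℝ => fourier (-j) (θ : AddCircle ((1 : ℝ) - 0)) •
      ((v : ℂ) ^ 2 * (bernoulliFun 1 θ : ℂ))) MeasureTheory.volume 0 1 := by
    apply Continuous.intervalIntegrable
    have := continuous_bernoulliFun 1
    have h2 : Continuous fun θ : ℝ => fourier (-j) (θ : AddCircle ((1 : ℝ) - 0)) :=
      (map_continuous (fourier (-j))).comp (AddCircle.continuous_mk' _)
    fun_prop
  have hder : fourierCoeffOn zero_lt_one (fun θ => (v : ℂ) * gg v θ +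
      v ^ 2 * (bernoulliFun 1 θ : ℂ)) j =
      v * fourierCoeffOn zero_lt_one (gg v) j + v ^ 2 * bernoulliFourierCoeff 1 j := by
    rw [bernoulliFourierCoeff, ← fourierCoeffOn.const_mul, ← fourierCoeffOn.const_mul,
      fourierCoeffOn_eq_integral, fourierCoeffOn_eq_integral, fourierCoeffOn_eq_integral,
      ← smul_add, ← intervalIntegral.integral_add hi1 hi2]
    simp_rw [smul_add]
  have hint : IntervalIntegrable (fun θ => (v : ℂ) * gg v θ +
      v ^ 2 * (bernoulliFun 1 θ : ℂ)) MeasureTheory.volume 0 1 := by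
    apply Continuous.intervalIntegrable
    have := gg_cont v
    have := continuous_bernoulliFun 1
    fun_prop
  have hvc : (v : ℂ) ≠ 0 := by exact_mod_cast hv.ne'
  rcases eq_or_ne j 0 with rfl | hj
  · rw [bernoulliFourierCoeff_zero one_ne_zero] at hder
    have h0 : fourierCoeffOn zero_lt_one (fun θ => (v : ℂ) * gg v θ +
      v ^ 2 * (bernoulliFun 1 θ : ℂ)) 0 = 0 := by
      rw [fourierCoeffOn_eq_integral]
      simp only [neg_zero, fourier_zero, one_smul]
      rw [intervalIntegral.integral_eq_sub_of_hasDerivAt (fun θ _ => gg_deriv v θ) hint,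
        gg_ends hv]
      simp
    rw [h0] at hder
    have : fourierCoeffOn zero_lt_one (gg v) 0 = 0 := by
      have : (v : ℂ) * fourierCoeffOn zero_lt_one (gg v) 0 = 0 := by
        rw [hder]; ring
      exact (mul_eq_zero.mp this).resolve_left hvc
    rw [this, zz_zero]; simp
  · have h := fourierCoeffOn_of_hasDerivAt zero_lt_one hj (fun θ _ => gg_deriv v θ) hint
    rw [hder, bernoulliFourierCoeff_eq one_ne_zero, gg_ends hv] at h
    have hz : (1 : ℂ) / (-2 * Real.pi * Complex.I * j) = -zz j := by
      rw [zz, show (-2 * Real.pi * Complex.I * j : ℂ) = -(2 * Real.pi * Complex.I * j) by ring,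
        div_neg]
    have hz2 : (-(Nat.factorial 1 : ℂ)) / (2 * Real.pi * Complex.I * j) ^ 1 = -zz j := by
      rw [zz, pow_one, Nat.factorial_one, Nat.cast_one, neg_div]
    rw [hz, hz2] at h
    have hn := one_sub_ne v j
    rw [← mul_div_assoc, eq_div_iff hn]
    simp at h
    linear_combination h

lemma PF_base {θ : ℝ} (hθ : θ ∈ Set.Ico (0 : ℝ) 1) {v : ℝ} (hv : 0 < v) :
    gg v θ = -(v : ℂ) ^ 2 * FF θ 2 v := by
  let G : C(AddCircle (1 : ℝ), ℂ) := ContinuousMap.mk (AddCircle.liftIco 1 0 (gg v))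
    (AddCircle.liftIco_zero_continuous (gg_ends hv) (gg_cont v).continuousOn)
  have hc : ∀ j, fourierCoeff G j = -(v ^ 2 : ℂ) * (zz j ^ 2 / (1 - v * zz j)) := by
    intro j
    rw [← gg_coeff hv]
    simp only [G, ContinuousMap.coe_mk]
    rw [fourierCoeff_liftIco_eq]
    simp only [zero_add]
  have hs : Summable (fourierCoeff G) := by
    have h2 : Summable fun j => -(v ^ 2 : ℂ) * (zz j ^ 2 / (1 - v * zz j)) := by
      refine Summable.mul_left _ (Summable.of_norm_bounded zz_summable fun j => ?_)
      rw [norm_div]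
      exact (div_le_self (norm_nonneg _) (norm_one_sub_ge v j)).trans (zz_pow_le j le_rfl)
    exact h2.congr fun j => (hc j).symm
  have h := has_pointwise_sum_fourier_series_of_summable hs (θ : AddCircle (1 : ℝ))
  have hG : G (θ : AddCircle (1 : ℝ)) = gg v θ := by
    simp only [G, ContinuousMap.coe_mk]
    rw [AddCircle.liftIco_coe_apply (show θ ∈ Set.Ico 0 (0 + 1) by rwa [zero_add])]
  rw [hG] at h
  rw [← h.tsum_eq, FF, ← tsum_mul_left]
  refine tsum_congr fun j => ?_
  rw [hc, ee, smul_eq_mul]; ring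

lemma PF {θ : ℝ} (hθ : θ ∈ Set.Ico (0 : ℝ) 1) {v : ℝ} (hv : 0 < v) {n : ℕ} (hn : 2 ≤ n) :
    (v : ℂ) * Real.exp (θ * v) / (Real.exp v - 1) =
      ∑ i ∈ Finset.range n, bb θ i * v ^ i - v ^ n * FF θ n v := by
  induction n, hn using Nat.le_induction with
  | base =>
    have h := PF_base hθ hv
    rw [gg] at h
    rw [Finset.sum_range_succ, Finset.sum_range_one, bb, bb, bernPoly_eq, bernPoly_eq]
    push_cast at h ⊢
    simp only [bernoulliFun_zero]
    simp
    simp at h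
    linear_combination h
  | succ n hn ih =>
    rw [ih, Finset.sum_range_succ, FF_rec ⟨hθ.1, hθ.2.le⟩ hn]
    ring

noncomputable def QQ (θ : ℝ) (p : ℕ) (x : ℝ) (k : ℕ) (v : ℝ) : ℂ :=
  (∑ i ∈ Finset.range k, (stirling1Unsigned (k + 1) (i + 2) : ℂ) * (v : ℂ) ^ i * (-bb θ (p + i))) /
    risingProd (x : ℂ) (k + 1)

noncomputable def TT (θ : ℝ) (p : ℕ) (x : ℝ) (v : ℝ) (j : ℤ) (k : ℕ) : ℂ :=
  ee θ j * zz j ^ p * (DD k (v * zz j) / risingProd (x : ℂ) (k + 1))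

noncomputable def hh (x : ℝ) (k : ℕ) : ℝ := qq x k * HH k / (x + k + 1)

lemma hh_nonneg {x : ℝ} (hx : 0 < x) (k : ℕ) : 0 ≤ hh x k := by
  have := qq_pos hx k
  have := HH_nonneg k
  rw [hh]; positivity

lemma TT_bound (θ : ℝ) {p : ℕ} (hp : 2 ≤ p) {x : ℝ} (hx : 0 < x) {v : ℝ} (hv : 0 < v) (j : ℤ)
    (k : ℕ) : ‖TT θ p x v j k‖ ≤ ‖zz j‖ ^ 2 * (Real.exp (v / 2) * hh x k) := by
  rcases eq_or_ne j 0 with rfl | hj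
  · rw [TT, zz_zero, zero_pow (by omega)]; simp
  · rw [TT, norm_mul, norm_mul, ee_norm, one_mul]
    refine mul_le_mul (zz_pow_le j hp) ?_ (norm_nonneg _) (by positivity)
    have hjr : (j : ℝ) ≠ 0 := by exact_mod_cast hj
    have hb : v * (-(1 / (2 * Real.pi * j))) ≠ 0 := by
      have := Real.pi_pos
      simp [hv.ne', this.ne', hj]
    have h := DD_bound hx hb k
    have e1 : (v : ℂ) * zz j = ((v * (-(1 / (2 * Real.pi * j))) : ℝ) : ℂ) * Complex.I := by
      rw [zz_eq]; push_cast; ring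
    rw [e1]
    refine h.trans (mul_le_mul_of_nonneg_right ?_ (hh_nonneg hx k))
    apply Real.exp_le_exp.mpr
    have h1 : |v * (-(1 / (2 * Real.pi * j)))| = v * ‖zz j‖ := by
      rw [zz_norm, abs_mul, abs_neg, abs_div, abs_mul, abs_one, abs_of_pos hv,
        abs_of_pos Real.two_pi_pos]
    rw [h1]
    have h2 := zz_norm_le j
    have hp := Real.pi_pos
    calc Real.pi * (v * ‖zz j‖) ≤ Real.pi * (v * (1 / (2 * Real.pi))) := by gcongr
      _ = v / 2 := by field_simp

lemma TT_summable (θ : ℝ) {p : ℕ} (hp : 2 ≤ p) {x : ℝ} (hx : 0 < x) {v : ℝ} (hv : 0 < v) :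
    Summable fun q : ℤ × ℕ => TT θ p x v q.1 q.2 := by
  have hs : Summable fun k => Real.exp (v / 2) * hh x k := (summable_hh hx).mul_left _
  have h2 := zz_summable.mul_of_nonneg hs (fun _ => by positivity)
    (fun k => mul_nonneg (Real.exp_pos _).le (hh_nonneg hx k))
  exact Summable.of_norm_bounded h2 fun q => TT_bound θ hp hx hv q.1 q.2

lemma TT_hasSum_j {θ : ℝ} (hθ : θ ∈ Set.Icc (0 : ℝ) 1) {p : ℕ} (hp : 2 ≤ p) (x : ℝ) (v : ℝ)
    (k : ℕ) : HasSum (fun j => TT θ p x v j k) (QQ θ p x k v) := by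
  have h : ∀ i ∈ Finset.range k, HasSum (fun j => (stirling1Unsigned (k + 1) (i + 2) : ℂ) *
      (v : ℂ) ^ i * (ee θ j * zz j ^ (p + i)))
      ((stirling1Unsigned (k + 1) (i + 2) : ℂ) * (v : ℂ) ^ i * (-bb θ (p + i))) := fun i _ =>
    (hasSum_zz hθ (by omega)).mul_left _
  convert! (hasSum_sum h).div_const (risingProd (x : ℂ) (k + 1)) using 1
  funext j
  rw [TT, DD, ← mul_div_assoc, Finset.mul_sum]
  congr 1
  refine Finset.sum_congr rfl fun i _ => ?_
  rw [mul_pow, pow_add]; ring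

lemma TT_hasSum_k (θ : ℝ) {p : ℕ} (hp : 2 ≤ p) {x : ℝ} (hx : 0 < x) {v : ℝ} (hv : 0 < v) (j : ℤ) :
    HasSum (fun k => TT θ p x v j k)
      (1 / (x : ℂ) ^ 2 * (ee θ j * zz j ^ p / (1 - ((v / x : ℝ) : ℂ) * zz j))) := by
  rcases eq_or_ne j 0 with rfl | hj
  · simp only [TT, zz_zero]
    rw [zero_pow (by omega)]; simpa using hasSum_zero
  · have hjr : (j : ℝ) ≠ 0 := by exact_mod_cast hj
    have hb : v * (-(1 / (2 * Real.pi * j))) ≠ 0 := by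
      have := Real.pi_pos
      simp [hv.ne', this.ne', hj]
    have h := (DD_hasSum hx hb).mul_left (ee θ j * zz j ^ p)
    have e1 : (v : ℂ) * zz j = ((v * (-(1 / (2 * Real.pi * j))) : ℝ) : ℂ) * Complex.I := by
      rw [zz_eq]; push_cast; ring
    rw [← e1] at h
    convert! h using 1
    have hxc : (x : ℂ) ≠ 0 := by exact_mod_cast hx.ne'
    have h1 := one_sub_ne (v / x) j
    have h3 : 1 - ((v / x : ℝ) : ℂ) * zz j = ((x : ℂ) - v * zz j) / x := by
      push_cast; field_simp
    have h2 : (x : ℂ) - v * zz j ≠ 0 := by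
      intro h0; rw [h3, h0] at h1; simp at h1
    rw [h3]
    field_simp

lemma QQ_hasSum {θ : ℝ} (hθ : θ ∈ Set.Icc (0 : ℝ) 1) {p : ℕ} (hp : 2 ≤ p) {x : ℝ} (hx : 0 < x)
    {v : ℝ} (hv : 0 < v) :
    HasSum (fun k => QQ θ p x k v) (1 / (x : ℂ) ^ 2 * FF θ p (v / x)) := by
  have hs := TT_summable θ hp hx hv
  have h1 := hs.hasSum.prod_fiberwise (fun j => TT_hasSum_k θ hp hx hv j)
  have h2 := (FF_summable θ hp (v / x)).hasSum.mul_left (1 / (x : ℂ) ^ 2)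
  have h3 := h1.unique h2
  rw [FF, ← h3]
  have hs' : HasSum (fun q : ℕ × ℤ => TT θ p x v q.2 q.1)
      (∑' q : ℤ × ℕ, TT θ p x v q.1 q.2) :=
    (Equiv.prodComm ℕ ℤ).hasSum_iff.mpr hs.hasSum
  exact hs'.prod_fiberwise (fun k => TT_hasSum_j hθ hp x v k)

lemma QQ_bound {θ : ℝ} (hθ : θ ∈ Set.Icc (0 : ℝ) 1) {p : ℕ} (hp : 2 ≤ p) {x : ℝ} (hx : 0 < x)
    {v : ℝ} (hv : 0 < v) (k : ℕ) : ‖QQ θ p x k v‖ ≤ CC * (Real.exp (v / 2) * hh x k) := by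
  rw [← (TT_hasSum_j hθ hp x v k).tsum_eq]
  exact tsum_of_norm_bounded (zz_summable.hasSum.mul_right _) (TT_bound θ hp hx hv · k)

open MeasureTheory in
lemma WQ_congr (θ : ℝ) (p : ℕ) (x : ℝ) (s : ℂ) (k : ℕ) {v : ℝ} (hv : 0 < v) :
    ((Real.exp (-v) : ℝ) : ℂ) * (v : ℂ) ^ s * QQ θ p x k v =
    ∑ i ∈ Finset.range k, (stirling1Unsigned (k + 1) (i + 2) : ℂ) * (-bb θ (p + i)) /
      risingProd (x : ℂ) (k + 1) * (((Real.exp (-v) : ℝ) : ℂ) * (v : ℂ) ^ (s + i + 1 - 1)) := by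
  have hvc : (v : ℂ) ≠ 0 := by exact_mod_cast hv.ne'
  rw [QQ, ← mul_div_assoc, Finset.mul_sum, Finset.sum_div]
  refine Finset.sum_congr rfl fun i _ => ?_
  rw [add_sub_cancel_right, Complex.cpow_add _ _ hvc, Complex.cpow_natCast]
  ring

open MeasureTheory in
lemma WQ_int (θ : ℝ) (p : ℕ) (x : ℝ) {s : ℂ} (hs : 0 < s.re) (k : ℕ) :
    IntegrableOn (fun v : ℝ => ((Real.exp (-v) : ℝ) : ℂ) * (v : ℂ) ^ s * QQ θ p x k v)
      (Set.Ioi 0) := by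
  have h : IntegrableOn (fun v : ℝ => ∑ i ∈ Finset.range k,
      (stirling1Unsigned (k + 1) (i + 2) : ℂ) * (-bb θ (p + i)) /
      risingProd (x : ℂ) (k + 1) * (((Real.exp (-v) : ℝ) : ℂ) * (v : ℂ) ^ (s + i + 1 - 1)))
      (Set.Ioi 0) := by
    refine integrable_finsetSum _ fun i _ => ?_
    refine (Complex.GammaIntegral_convergent (s := s + i + 1) ?_).const_mul _
    simp; positivity
  exact h.congr_fun (fun v hv => (WQ_congr θ p x s k hv).symm) measurableSet_Ioi

open MeasureTheory in
lemma WQ_val (θ : ℝ) (p : ℕ) (x : ℝ) {s : ℂ} (hs : 0 < s.re) (k : ℕ) :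
    ∫ v in Set.Ioi (0 : ℝ), ((Real.exp (-v) : ℝ) : ℂ) * (v : ℂ) ^ s * QQ θ p x k v =
    ∑ i ∈ Finset.range k, (stirling1Unsigned (k + 1) (i + 2) : ℂ) * (-bb θ (p + i)) /
      risingProd (x : ℂ) (k + 1) * Complex.Gamma (s + i + 1) := by
  rw [setIntegral_congr_fun measurableSet_Ioi (fun v hv => WQ_congr θ p x s k hv)]
  have hi : ∀ i : ℕ, 0 < (s + i + 1).re := fun i => by simp; positivity
  rw [integral_finsetSum _ fun i _ => (Complex.GammaIntegral_convergent (hi i)).const_mul _]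
  refine Finset.sum_congr rfl fun i _ => ?_
  rw [Complex.Gamma_eq_integral (hi i), Complex.GammaIntegral, integral_const_mul]

open MeasureTheory in
lemma W_half {s : ℂ} (hs : 0 < s.re) :
    IntegrableOn (fun v : ℝ => v ^ s.re * Real.exp (-v / 2)) (Set.Ioi 0) := by
  have h := integrableOn_rpow_mul_exp_neg_mul_rpow (s := s.re) (p := 1) (b := 1 / 2) (by linarith)
    one_pos (by norm_num)
  refine h.congr_fun (fun v hv => ?_) measurableSet_Ioi
  simp only [Real.rpow_one]
  congr 2; ring

lemma CC_nonneg : 0 ≤ CC := tsum_nonneg fun _ => by positivity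

open MeasureTheory in
lemma WQ_norm {θ : ℝ} (hθ : θ ∈ Set.Icc (0 : ℝ) 1) {p : ℕ} (hp : 2 ≤ p) {x : ℝ} (hx : 0 < x)
    {s : ℂ} (hs : 0 < s.re) (k : ℕ) :
    ∫ v in Set.Ioi (0 : ℝ), ‖((Real.exp (-v) : ℝ) : ℂ) * (v : ℂ) ^ s * QQ θ p x k v‖ ≤
    hh x k * (CC * ∫ v in Set.Ioi (0 : ℝ), v ^ s.re * Real.exp (-v / 2)) := by
  rw [← integral_const_mul, ← integral_const_mul]
  refine setIntegral_mono_on (WQ_int θ p x hs k).norm (((W_half hs).const_mul _).const_mul _)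
    measurableSet_Ioi fun v hv => ?_
  have hv : 0 < v := hv
  rw [norm_mul, norm_mul, Complex.norm_real, Real.norm_of_nonneg (Real.exp_pos _).le,
    Complex.norm_cpow_eq_rpow_re_of_pos hv]
  calc _ ≤ Real.exp (-v) * v ^ s.re * (CC * (Real.exp (v / 2) * hh x k)) := by
        gcongr
        exact QQ_bound hθ hp hx hv k
    _ = _ := by
        rw [show -v / 2 = -v + v / 2 by ring, Real.exp_add]; ring

open MeasureTheory in
lemma WQ_hasSum {θ : ℝ} (hθ : θ ∈ Set.Icc (0 : ℝ) 1) {p : ℕ} (hp : 2 ≤ p) {x : ℝ} (hx : 0 < x)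
    {s : ℂ} (hs : 0 < s.re) :
    HasSum (fun k => ∑ i ∈ Finset.range k,
      (stirling1Unsigned (k + 1) (i + 2) : ℂ) * (-bb θ (p + i)) /
      risingProd (x : ℂ) (k + 1) * Complex.Gamma (s + i + 1))
      (1 / (x : ℂ) ^ 2 * ∫ v in Set.Ioi (0 : ℝ),
        ((Real.exp (-v) : ℝ) : ℂ) * (v : ℂ) ^ s * FF θ p (v / x)) := by
  have h := hasSum_integral_of_summable_integral_norm (fun k => WQ_int θ p x hs k)
    (Summable.of_nonneg_of_le (fun k => integral_nonneg fun v => norm_nonneg _)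
      (fun k => WQ_norm hθ hp hx hs k) ((summable_hh hx).mul_right _))
  simp only [WQ_val θ p x hs] at h
  convert! h using 1
  rw [← integral_const_mul]
  refine setIntegral_congr_fun measurableSet_Ioi fun v hv => ?_
  rw [tsum_mul_left, (QQ_hasSum hθ hp hx hv).tsum_eq]
  ring

lemma FF_cont (θ : ℝ) {p : ℕ} (hp : 2 ≤ p) : Continuous (FF θ p) := by
  refine continuous_tsum (fun j => ?_) zz_summable (fun j v => FF_bd θ hp v j)
  refine Continuous.div (by fun_prop) (by fun_prop) fun v => one_sub_ne v j

noncomputable def ff (θ : ℝ) (a : ℕ) (x : ℝ) (v : ℝ) : ℂ :=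
  ((Real.exp (-(x * v)) : ℝ) : ℂ) *
    (bb θ (a + 1) * (v : ℂ) ^ (a + 1) - (v : ℂ) ^ (a + 2) * FF θ (a + 2) v)

lemma ff_cont (θ : ℝ) (a : ℕ) (x : ℝ) : Continuous (ff θ a x) := by
  have := FF_cont θ (p := a + 2) (by omega)
  unfold ff
  fun_prop

lemma ff_eq {θ : ℝ} (hθ : θ ∈ Set.Ico (0 : ℝ) 1) (a : ℕ) (x : ℝ) {v : ℝ} (hv : 0 < v) :
    ff θ a x v = ((Real.exp (-(x * v)) : ℝ) : ℂ) * ((v : ℂ) * Real.exp (θ * v) / (Real.exp v - 1) -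
      ∑ i ∈ Finset.range (a + 1), bb θ i * v ^ i) := by
  rw [PF hθ hv (n := a + 2) (by omega), Finset.sum_range_succ _ (a + 1), ff]
  ring

lemma ff_norm (θ : ℝ) (a : ℕ) (x : ℝ) {v : ℝ} (hv : 0 < v) :
    ‖ff θ a x v‖ ≤ Real.exp (-(x * v)) * (‖bb θ (a + 1)‖ * v ^ (a + 1) + v ^ (a + 2) * CC) := by
  rw [ff, norm_mul, Complex.norm_real, Real.norm_of_nonneg (Real.exp_pos _).le]
  gcongr
  refine (norm_sub_le _ _).trans ?_
  rw [norm_mul, norm_mul, norm_pow, norm_pow, Complex.norm_real, Real.norm_of_nonneg hv.le]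
  gcongr
  exact FF_norm θ (by omega) v

open Asymptotics Filter in
lemma ff_top (θ : ℝ) (a : ℕ) {x : ℝ} (hx : 0 < x) :
    ff θ a x =O[atTop] fun t => Real.exp (-(x / 2) * t) := by
  have h1 : (ff θ a x) =O[atTop] fun v =>
      Real.exp (-(x * v)) * (‖bb θ (a + 1)‖ * v ^ (a + 1) + CC * v ^ (a + 2)) := by
    refine IsBigO.of_bound 1 ?_
    filter_upwards [eventually_gt_atTop 0] with v hv
    rw [one_mul]
    refine (ff_norm θ a x hv).trans ((le_abs_self _).trans (le_of_eq ?_))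
    rw [Real.norm_eq_abs, mul_comm CC]
  refine h1.trans ?_
  have h2 : (fun v : ℝ => ‖bb θ (a + 1)‖ * v ^ (a + 1) + CC * v ^ (a + 2)) =O[atTop]
      fun v => Real.exp (x / 2 * v) :=
    ((isLittleO_pow_exp_pos_mul_atTop (a + 1) (by positivity)).isBigO.const_mul_left _).add
      ((isLittleO_pow_exp_pos_mul_atTop (a + 2) (by positivity)).isBigO.const_mul_left _)
  refine ((isBigO_refl (fun v => Real.exp (-(x * v))) atTop).mul h2).congr_right fun v => ?_
  rw [← Real.exp_add]; congr 1; ring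

open Asymptotics Filter Topology in
lemma ff_bot (θ : ℝ) (a : ℕ) {x : ℝ} (hx : 0 < x) :
    ff θ a x =O[𝓝[>] 0] fun t : ℝ => t ^ (-(-(a + 1 : ℝ))) := by
  refine IsBigO.of_bound (‖bb θ (a + 1)‖ + CC) ?_
  filter_upwards [self_mem_nhdsWithin, mem_nhdsWithin_of_mem_nhds (Iio_mem_nhds one_pos)]
    with v hv hv1
  have hv : 0 < v := hv
  have hv1 : v < 1 := hv1
  refine (ff_norm θ a x hv).trans ?_
  rw [neg_neg, show (a : ℝ) + 1 = ((a + 1 : ℕ) : ℝ) by push_cast; rfl, Real.rpow_natCast,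
    Real.norm_of_nonneg (by positivity)]
  have h1 : Real.exp (-(x * v)) ≤ 1 := Real.exp_le_one_iff.mpr (by nlinarith)
  have hC := CC_nonneg
  calc _ ≤ 1 * (‖bb θ (a + 1)‖ * v ^ (a + 1) + v ^ (a + 1) * CC) := by
        gcongr ?_ * (_ + ?_ * _)
        exact pow_le_pow_of_le_one hv.le hv1.le (by omega)
    _ = _ := by ring

lemma ff_conv (θ : ℝ) (a : ℕ) {x : ℝ} (hx : 0 < x) {s : ℂ} (hs : -(a + 1 : ℝ) < s.re) :
    MellinConvergent (ff θ a x) s :=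
  mellinConvergent_of_isBigO_rpow_exp (by positivity)
    ((ff_cont θ a x).locallyIntegrable.locallyIntegrableOn _) (ff_top θ a hx) (ff_bot θ a hx) hs

lemma ff_diff (θ : ℝ) (a : ℕ) {x : ℝ} (hx : 0 < x) {s : ℂ} (hs : -(a + 1 : ℝ) < s.re) :
    DifferentiableAt ℂ (mellin (ff θ a x)) s :=
  mellin_differentiableAt_of_isBigO_rpow_exp (by positivity)
    ((ff_cont θ a x).locallyIntegrable.locallyIntegrableOn _) (ff_top θ a hx) (ff_bot θ a hx) hs

open MeasureTheory in
lemma WF_int (θ : ℝ) {p : ℕ} (hp : 2 ≤ p) (x : ℝ) {s : ℂ} (hs : 0 < s.re) :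
    IntegrableOn (fun v : ℝ => ((Real.exp (-v) : ℝ) : ℂ) * (v : ℂ) ^ s * FF θ p (v / x))
      (Set.Ioi 0) := by
  have h := Complex.GammaIntegral_convergent (s := s + 1) (by simp; positivity)
  simp only [add_sub_cancel_right] at h
  refine Integrable.mul_bdd h ?_ (c := CC) (Filter.Eventually.of_forall fun v => FF_norm θ hp _)
  exact ((FF_cont θ hp).comp (by fun_prop : Continuous fun v : ℝ => v / x)).aestronglyMeasurable

open MeasureTheory in
lemma mellin_ff {θ : ℝ} (a : ℕ) {x : ℝ} (hx : 0 < x) {σ : ℂ} (hs : -(a + 1 : ℝ) < σ.re) :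
    (x : ℂ) ^ (σ + a) * mellin (ff θ a x) σ =
    1 / x * (bb θ (a + 1) * Complex.Gamma (σ + a + 1)) -
      1 / (x : ℂ) ^ 2 * ∫ v in Set.Ioi (0 : ℝ),
        ((Real.exp (-v) : ℝ) : ℂ) * (v : ℂ) ^ (σ + a + 1) * FF θ (a + 2) (v / x) := by
  have hs' : 0 < (σ + a + 1).re := by simp; linarith
  have hxc : (x : ℂ) ≠ 0 := by exact_mod_cast hx.ne'
  have h1 : ff θ a x = fun t => (fun v : ℝ => ((Real.exp (-v) : ℝ) : ℂ) *
    (bb θ (a + 1) * ((v / x : ℝ) : ℂ) ^ (a + 1) - ((v / x : ℝ) : ℂ) ^ (a + 2) *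
      FF θ (a + 2) (v / x))) (x * t) := by
    funext t
    simp only
    rw [mul_div_cancel_left₀ _ hx.ne', ff]
  have h2 : mellin (ff θ a x) σ = (x : ℂ) ^ (-σ) * mellin (fun v : ℝ =>
      ((Real.exp (-v) : ℝ) : ℂ) *
    (bb θ (a + 1) * ((v / x : ℝ) : ℂ) ^ (a + 1) - ((v / x : ℝ) : ℂ) ^ (a + 2) *
      FF θ (a + 2) (v / x))) σ := by
    rw [h1]
    exact mellin_comp_mul_left (E := ℂ) (fun v : ℝ => ((Real.exp (-v) : ℝ) : ℂ) *
      (bb θ (a + 1) * ((v / x : ℝ) : ℂ) ^ (a + 1) - ((v / x : ℝ) : ℂ) ^ (a + 2) *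
      FF θ (a + 2) (v / x))) σ hx
  have h3 : mellin (fun v : ℝ => ((Real.exp (-v) : ℝ) : ℂ) *
    (bb θ (a + 1) * ((v / x : ℝ) : ℂ) ^ (a + 1) - ((v / x : ℝ) : ℂ) ^ (a + 2) *
      FF θ (a + 2) (v / x))) σ = 1 / (x : ℂ) ^ (a + 1) * (bb θ (a + 1) * Complex.Gamma (σ + a + 1))
      - 1 / (x : ℂ) ^ (a + 2) * ∫ v in Set.Ioi (0 : ℝ),
        ((Real.exp (-v) : ℝ) : ℂ) * (v : ℂ) ^ (σ + a + 1) * FF θ (a + 2) (v / x) := by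
    rw [Complex.Gamma_eq_integral hs', Complex.GammaIntegral, ← integral_const_mul,
      ← integral_const_mul, ← integral_const_mul, ← integral_sub, mellin]
    · refine setIntegral_congr_fun measurableSet_Ioi fun v hv => ?_
      have hv : 0 < v := hv
      have hvc : (v : ℂ) ≠ 0 := by exact_mod_cast hv.ne'
      simp only [smul_eq_mul]
      rw [add_sub_cancel_right, Complex.cpow_add (σ + a) _ hvc, Complex.cpow_add _ _ hvc,
        Complex.cpow_sub _ _ hvc, Complex.cpow_natCast, Complex.cpow_one]
      push_cast
      rw [div_pow, div_pow]
      field_simp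
      ring
    · exact ((Complex.GammaIntegral_convergent hs').const_mul _).const_mul _
    · exact (WF_int θ (by omega) x hs').const_mul _
  rw [h2, h3, ← mul_assoc, ← Complex.cpow_add _ _ hxc, show σ + a + -σ = (a : ℂ) by ring,
    Complex.cpow_natCast, pow_add, pow_add]
  field_simp

lemma RR_hasSum {θ : ℝ} (hθ : θ ∈ Set.Icc (0 : ℝ) 1) (a : ℕ) {x : ℝ} (hx : 0 < x) {σ : ℂ}
    (hs : -(a + 1 : ℝ) < σ.re) :
    HasSum (fun k => (∑ i ∈ Finset.range (k + 1), (stirling1Unsigned (k + 1) (i + 1) : ℂ) *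
      bb θ (a + 1 + i) * Complex.Gamma (σ + a + 1 + i)) / risingProd (x : ℂ) (k + 1))
      ((x : ℂ) ^ (σ + a) * mellin (ff θ a x) σ) := by
  have hs' : 0 < (σ + a + 1).re := by simp; linarith
  have h1 := WQ_hasSum hθ (p := a + 2) (by omega) hx hs'
  have h0 := hasSum_PP hx 0
  have hP0 : ∀ k, PP (((0 : ℝ) : ℂ) * Complex.I) k = 1 := by intro k; simp [PP]
  simp only [hP0, mul_one] at h0
  simp only [Complex.ofReal_zero, zero_mul, sub_zero] at h0
  have h2 := (h0.mul_right (bb θ (a + 1) * Complex.Gamma (σ + a + 1))).sub h1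
  rw [← mellin_ff a hx hs] at h2
  convert! h2 using 1
  funext k
  rw [Finset.sum_range_succ', zero_add, stir_succ_one, ← fact_div_rp, add_div, Finset.sum_div,
    add_comm, sub_eq_add_neg, ← Finset.sum_neg_distrib]
  congr 1
  · simp; ring
  · refine Finset.sum_congr rfl fun i _ => ?_
    rw [show a + 1 + (i + 1) = a + 2 + i by ring,
      show σ + a + 1 + ((i + 1 : ℕ) : ℂ) = σ + a + 1 + i + 1 by push_cast; ring]
    ring

lemma preconn {c : ℝ} (hc : 0 < c) : IsPreconnected {σ : ℂ | -c < σ.re ∧ σ ≠ 0} := by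
  have hA : IsPreconnected {σ : ℂ | 0 < σ.re} := (convex_halfSpace_re_gt 0).isPreconnected
  have hB : IsPreconnected ({σ : ℂ | -c < σ.re} ∩ {σ : ℂ | 0 < σ.im}) :=
    ((convex_halfSpace_re_gt _).inter (convex_halfSpace_im_gt 0)).isPreconnected
  have hC : IsPreconnected ({σ : ℂ | -c < σ.re} ∩ {σ : ℂ | σ.im < 0}) :=
    ((convex_halfSpace_re_gt _).inter (convex_halfSpace_im_lt 0)).isPreconnected
  have hD : IsPreconnected ({σ : ℂ | -c < σ.re} ∩ {σ : ℂ | σ.re < 0}) :=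
    ((convex_halfSpace_re_gt _).inter (convex_halfSpace_re_lt 0)).isPreconnected
  have h1 := IsPreconnected.union (1 + Complex.I) (by simp) (by simp; linarith) hA hB
  have h2 := IsPreconnected.union (1 - Complex.I) (by left; simp) (by simp; linarith) h1 hC
  have h3 := IsPreconnected.union (((-(c / 2) : ℝ) : ℂ) + Complex.I) (by left; right; simp [hc])
    (by simp [hc]) h2 hD
  convert! h3 using 1
  ext σ
  simp only [Set.mem_ofPred_eq, Set.mem_union, Set.mem_inter_iff, ne_eq, Complex.ext_iff,
    Complex.zero_re, Complex.zero_im]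
  constructor
  · rintro ⟨h1, h2⟩
    rcases lt_trichotomy σ.re 0 with h | h | h
    · tauto
    · rcases lt_trichotomy σ.im 0 with h' | h' | h'
      · tauto
      · tauto
      · tauto
    · tauto
  · rintro (((h | h) | h) | h)
    · exact ⟨by linarith, fun hh => by linarith [hh.1]⟩
    · exact ⟨by linarith, fun hh => by linarith [hh.2]⟩
    · exact ⟨by linarith, fun hh => by linarith [hh.2]⟩
    · exact ⟨by linarith, fun hh => by linarith [hh.1]⟩

noncomputable def EE (x : ℝ) (t : ℝ) : ℂ := ((Real.exp (-(x * t)) : ℝ) : ℂ)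

open Asymptotics Filter Topology in
lemma EE_conv {x : ℝ} (hx : 0 < x) {s : ℂ} (hs : 0 < s.re) : MellinConvergent (EE x) s := by
  have hc : Continuous (EE x) := by unfold EE; fun_prop
  refine mellinConvergent_of_isBigO_rpow_exp (a := x) (b := 0) hx
    (hc.locallyIntegrable.locallyIntegrableOn _) ?_ ?_ hs
  · refine IsBigO.of_bound 1 (Eventually.of_forall fun t => ?_)
    rw [EE, Complex.norm_real, neg_mul, one_mul]
  · simp only [neg_zero, Real.rpow_zero]
    exact (hc.tendsto 0).isBigO_one ℝ |>.mono nhdsWithin_le_nhds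

lemma EE_val {x : ℝ} (hx : 0 < x) {s : ℂ} (hs : 0 < s.re) :
    mellin (EE x) s = (x : ℂ) ^ (-s) * Complex.Gamma s := by
  have h := Complex.integral_cpow_mul_exp_neg_mul_Ioi hs hx
  rw [mellin]
  simp only [EE, smul_eq_mul]
  push_cast
  rw [h, one_div, Complex.inv_cpow, Complex.cpow_neg]
  rw [Complex.arg_ofReal_of_nonneg hx.le]
  exact Real.pi_pos.ne

lemma Gam_add {σ : ℂ} (hσ : 0 < σ.re) (i : ℕ) :
    Complex.Gamma (σ + i) = (∏ r ∈ Finset.range i, (σ + r)) * Complex.Gamma σ := by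
  induction i with
  | zero => simp
  | succ i ih =>
    have : σ + i ≠ 0 := by
      intro h
      have := congrArg Complex.re h
      simp at this
      have h2 : (0 : ℝ) ≤ i := by positivity
      linarith
    rw [Finset.prod_range_succ, Nat.cast_succ, ← add_assoc, Complex.Gamma_add_one _ this, ih]
    ring

noncomputable def GG (n : ℕ) (t : ℝ) : ℂ :=
  ((Real.exp (-(n * t)) / (Real.exp t - 1) : ℝ) : ℂ)

lemma GG_hasSum (n : ℕ) {t : ℝ} (ht : 0 < t) :
    HasSum (fun i : ℕ => (1 : ℂ) * ((Real.exp (-(n + 1 + i : ℝ) * t) : ℝ) : ℂ)) (GG n t) := by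
  have hlt : Real.exp (-t) < 1 := Real.exp_lt_one_iff.mpr (by linarith)
  have h := (hasSum_geometric_of_lt_one (Real.exp_pos _).le hlt).mul_left (Real.exp (-((n + 1) * t)))
  have h2 : HasSum (fun i : ℕ => Real.exp (-(n + 1 + i : ℝ) * t))
      (Real.exp (-(n * t)) / (Real.exp t - 1)) := by
    convert! h using 1
    · funext i
      rw [← Real.exp_nat_mul, ← Real.exp_add]; congr 1; ring
    · have h3 : Real.exp t - 1 ≠ 0 := by have := Real.add_one_lt_exp ht.ne'; linarith
      have h4 : 1 - Real.exp (-t) ≠ 0 := by linarith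
      rw [show -((n + 1 : ℝ) * t) = -(n * t) + -t by ring, Real.exp_add, mul_assoc, div_eq_mul_inv]
      congr 1
      rw [← div_eq_mul_inv, inv_eq_one_div, div_eq_div_iff h3 h4, Real.exp_neg]
      field_simp
  simp only [one_mul]
  exact Complex.hasSum_ofReal.mpr h2

lemma GG_val (n : ℕ) {σ : ℂ} (hσ : 0 < σ.re) :
    mellin (GG n) (σ + 1) = Complex.Gamma (σ + 1) * (riemannZeta (σ + 1) -
      ∑ k ∈ Finset.range n, 1 / ((k : ℂ) + 1) ^ (σ + 1)) := by
  have hs : Summable fun k : ℕ => 1 / ((k : ℂ) + 1) ^ (σ + 1) := by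
    have := (summable_nat_add_iff 1).mpr ((Complex.summable_one_div_nat_cpow (p := σ + 1)).mpr
      (by simp; linarith))
    simpa using this
  have hs2 : Summable fun k : ℕ => 1 / (((k + n : ℕ) : ℂ) + 1) ^ (σ + 1) :=
    (summable_nat_add_iff n).mpr hs
  have h := hasSum_mellin (a := fun _ : ℕ => (1 : ℂ)) (p := fun i : ℕ => (n + 1 + i : ℝ))
    (F := GG n) (s := σ + 1) (fun i => Or.inr (by positivity)) (by simp; linarith)
    (fun t ht => GG_hasSum n ht) (by
      refine hs2.norm.congr fun i => ?_
      have hp : (0 : ℝ) < n + 1 + i := by positivity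
      rw [norm_div, show (((i + n : ℕ) : ℂ) + 1) = (((n + 1 + i : ℝ)) : ℂ) by push_cast; ring,
        Complex.norm_cpow_eq_rpow_re_of_pos hp])
  rw [← h.tsum_eq, zeta_eq_tsum_one_div_nat_add_one_cpow (by simp; linarith),
    ← hs.sum_add_tsum_nat_add n, add_sub_cancel_left, ← tsum_mul_left]
  refine tsum_congr fun i => ?_
  rw [show (((i + n : ℕ) : ℂ) + 1) = (((n + 1 + i : ℝ)) : ℂ) by push_cast; ring, mul_div_assoc]

lemma ff_GG {θ : ℝ} (hθ : θ ∈ Set.Ico (0 : ℝ) 1) (a n : ℕ) {x : ℝ} (hxn : x = n + θ) {t : ℝ}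
    (ht : 0 < t) : t * GG n t = ff θ a x t +
      ∑ i ∈ Finset.range (a + 1), bb θ i * (t ^ i * EE x t) := by
  rw [ff_eq hθ a x ht, GG, EE, mul_sub, Finset.mul_sum, sub_add_eq_add_sub, eq_sub_iff_add_eq]
  congr 1
  · have : Real.exp (-(n * t)) = Real.exp (-(x * t)) * Real.exp (θ * t) := by
      rw [← Real.exp_add, hxn]; congr 1; ring
    rw [this]
    push_cast; ring
  · refine Finset.sum_congr rfl fun i _ => ?_
    ring

open MeasureTheory in
lemma ident_pos {θ : ℝ} (hθ : θ ∈ Set.Ico (0 : ℝ) 1) (a n : ℕ) {x : ℝ} (hx : 0 < x)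
    (hxn : x = n + θ) {σ : ℂ} (hσ : 0 < σ.re) :
    mellin (GG n) (σ + 1) = mellin (ff θ a x) σ +
      ∑ i ∈ Finset.range (a + 1), bb θ i * ((x : ℂ) ^ (-(σ + i)) * Complex.Gamma (σ + i)) := by
  have hi : ∀ i : ℕ, 0 < (σ + i).re := fun i => by simp; positivity
  have h1 : ∀ i ∈ Finset.range (a + 1), bb θ i * ((x : ℂ) ^ (-(σ + i)) * Complex.Gamma (σ + i)) =
      ∫ t in Set.Ioi (0 : ℝ), bb θ i * ((t : ℂ) ^ (σ + i - 1) • EE x t) := fun i _ => by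
    rw [← EE_val hx (hi i), integral_const_mul, mellin]
  have hc : ∀ i ∈ Finset.range (a + 1), IntegrableOn (fun t : ℝ =>
      bb θ i * ((t : ℂ) ^ (σ + i - 1) • EE x t)) (Set.Ioi 0) := fun i _ =>
    (EE_conv hx (hi i)).const_mul _
  have hf : MellinConvergent (ff θ a x) σ := ff_conv θ a hx (by
    have : (0 : ℝ) ≤ a := by positivity
    linarith)
  rw [Finset.sum_congr rfl h1, ← integral_finsetSum _ hc, mellin, mellin,
    ← integral_add hf (integrable_finsetSum _ hc)]
  refine setIntegral_congr_fun measurableSet_Ioi fun t ht => ?_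
  have ht : 0 < t := ht
  have htc : (t : ℂ) ≠ 0 := by exact_mod_cast ht.ne'
  simp only [smul_eq_mul]
  have h := ff_GG hθ a n hxn ht
  have e1 : (t : ℂ) ^ (σ + 1 - 1) = t ^ (σ - 1) * t := by
    rw [add_sub_cancel_right, Complex.cpow_sub _ _ htc, Complex.cpow_one]; field_simp
  rw [e1, mul_assoc, h, mul_add, Finset.mul_sum]
  congr 1
  refine Finset.sum_congr rfl fun i _ => ?_
  rw [show σ + i - 1 = σ - 1 + i by ring, Complex.cpow_add _ _ htc, Complex.cpow_natCast]
  ring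

lemma ident_pos' {θ : ℝ} (hθ : θ ∈ Set.Ico (0 : ℝ) 1) (a n : ℕ) {x : ℝ} (hx : 0 < x)
    (hxn : x = n + θ) {σ : ℂ} (hσ : 0 < σ.re) :
    riemannZeta (σ + 1) - ∑ k ∈ Finset.range n, 1 / ((k : ℂ) + 1) ^ (σ + 1) =
    (Complex.Gamma (σ + 1))⁻¹ * mellin (ff θ a x) σ +
      1 / σ * ∑ i ∈ Finset.range (a + 1), bb θ i * ((∏ r ∈ Finset.range i, (σ + r)) *
        (x : ℂ) ^ (-(σ + i))) := by
  have h := ident_pos hθ a n hx hxn hσ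
  rw [GG_val n hσ] at h
  have hσ0 : σ ≠ 0 := by rintro rfl; simp at hσ
  have hG : Complex.Gamma (σ + 1) ≠ 0 := Complex.Gamma_ne_zero_of_re_pos (by simp; linarith)
  have hG' : Complex.Gamma (σ + 1) = σ * Complex.Gamma σ := Complex.Gamma_add_one _ hσ0
  have h2 : ∑ i ∈ Finset.range (a + 1), bb θ i * ((x : ℂ) ^ (-(σ + i)) * Complex.Gamma (σ + i)) =
      Complex.Gamma (σ + 1) * (1 / σ * ∑ i ∈ Finset.range (a + 1), bb θ i *
        ((∏ r ∈ Finset.range i, (σ + r)) * (x : ℂ) ^ (-(σ + i)))) := by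
    rw [hG', ← mul_assoc, show σ * Complex.Gamma σ * (1 / σ) = Complex.Gamma σ by field_simp,
      Finset.mul_sum]
    refine Finset.sum_congr rfl fun i _ => ?_
    rw [Gam_add hσ]; ring
  rw [h2] at h
  apply mul_left_cancel₀ hG
  rw [h, mul_add, mul_inv_cancel_left₀ hG]

open Topology in
lemma ident {θ : ℝ} (hθ : θ ∈ Set.Ico (0 : ℝ) 1) (a n : ℕ) {x : ℝ} (hx : 0 < x)
    (hxn : x = n + θ) {σ : ℂ} (hσ : -(a + 1 : ℝ) < σ.re) (hσ0 : σ ≠ 0) :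
    riemannZeta (σ + 1) - ∑ k ∈ Finset.range n, 1 / ((k : ℂ) + 1) ^ (σ + 1) =
    (Complex.Gamma (σ + 1))⁻¹ * mellin (ff θ a x) σ +
      1 / σ * ∑ i ∈ Finset.range (a + 1), bb θ i * ((∏ r ∈ Finset.range i, (σ + r)) *
        (x : ℂ) ^ (-(σ + i))) := by
  have hxc : (x : ℂ) ≠ 0 := by exact_mod_cast hx.ne'
  have hpc := preconn (c := (a + 1 : ℝ)) (by positivity)
  have hopen : IsOpen {σ : ℂ | -(a + 1 : ℝ) < σ.re ∧ σ ≠ 0} :=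
    (isOpen_lt continuous_const Complex.continuous_re).inter isOpen_ne
  have h1 : (1 : ℂ) ∈ {σ : ℂ | -(a + 1 : ℝ) < σ.re ∧ σ ≠ 0} := by
    refine ⟨?_, one_ne_zero⟩
    have : (0 : ℝ) ≤ a := by positivity
    simp; linarith
  refine AnalyticOnNhd.eqOn_of_preconnected_of_eventuallyEq (𝕜 := ℂ)
    (f := fun σ => riemannZeta (σ + 1) - ∑ k ∈ Finset.range n, 1 / ((k : ℂ) + 1) ^ (σ + 1))
    (g := fun σ => (Complex.Gamma (σ + 1))⁻¹ * mellin (ff θ a x) σ +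
      1 / σ * ∑ i ∈ Finset.range (a + 1), bb θ i * ((∏ r ∈ Finset.range i, (σ + r)) *
        (x : ℂ) ^ (-(σ + i)))) ?_ ?_ hpc h1 ?_ ⟨hσ, hσ0⟩
  · refine DifferentiableOn.analyticOnNhd (fun s hs => ?_) hopen
    refine DifferentiableAt.differentiableWithinAt ?_
    refine DifferentiableAt.sub ?_ ?_
    · exact (differentiableAt_riemannZeta (by simpa using hs.2)).comp s (by fun_prop)
    · refine DifferentiableAt.fun_sum fun k _ => ?_
      have hk : (k : ℂ) + 1 ≠ 0 := by exact_mod_cast Nat.succ_ne_zero k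
      refine DifferentiableAt.div (by fun_prop) ?_ (by simp [Complex.cpow_eq_zero_iff, hk])
      exact DifferentiableAt.const_cpow (by fun_prop) (Or.inl hk)
  · refine DifferentiableOn.analyticOnNhd (fun s hs => ?_) hopen
    refine DifferentiableAt.differentiableWithinAt ?_
    refine DifferentiableAt.add (DifferentiableAt.mul ?_ (ff_diff θ a hx hs.1)) 
      (DifferentiableAt.mul ?_ ?_)
    · exact DifferentiableAt.comp (g := fun s => (Complex.Gamma s)⁻¹) s
        (Complex.differentiable_one_div_Gamma (s + 1)) (by fun_prop)
    · exact DifferentiableAt.div (by fun_prop) (by fun_prop) hs.2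
    · refine DifferentiableAt.fun_sum fun i _ => ?_
      refine DifferentiableAt.const_mul (DifferentiableAt.mul (by fun_prop) ?_) _
      exact DifferentiableAt.const_cpow (by fun_prop) (Or.inl hxc)
  · have : {σ : ℂ | 0 < σ.re} ∈ 𝓝 (1 : ℂ) :=
      (isOpen_lt continuous_const Complex.continuous_re).mem_nhds (by simp)
    filter_upwards [this] with s hs
    exact ident_pos' hθ a n hx hxn hs

lemma GamInv_prod (s : ℂ) (q : ℕ) :
    (Complex.Gamma s)⁻¹ = (∏ i ∈ Finset.range q, (s + i)) * (Complex.Gamma (s + q))⁻¹ := by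
  induction q with
  | zero => simp
  | succ q ih =>
    rw [ih, Finset.prod_range_succ, Complex.one_div_Gamma_eq_self_mul_one_div_Gamma_add_one (s + q),
      Nat.cast_succ, ← add_assoc]
    ring

lemma GamInv {σ : ℂ} {q : ℕ} (h : 0 < (σ + 1 + q).re) :
    ∏ i ∈ Finset.range (q + 1), (σ + i) =
      σ * ((Complex.Gamma (σ + 1))⁻¹ * Complex.Gamma (σ + 1 + q)) := by
  have hG := Complex.Gamma_ne_zero_of_re_pos h
  rw [GamInv_prod (σ + 1) q, inv_mul_cancel_right₀ hG, Finset.prod_range_succ', Nat.cast_zero,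
    add_zero, mul_comm]
  congr 1
  refine Finset.prod_congr rfl fun i _ => ?_
  push_cast; ring

lemma cchoose_eq {m σ : ℂ} (h : m + 1 = -σ) (p : ℕ) :
    cchoose (m + 1) p = (-1) ^ p * (∏ i ∈ Finset.range p, (σ + i)) / p.factorial := by
  rw [cchoose, h]
  congr 1
  have : ∏ i ∈ Finset.range p, (-σ - (i : ℂ)) = ∏ i ∈ Finset.range p, ((-1) * (σ + (i : ℂ))) :=
    Finset.prod_congr rfl fun i _ => by ring
  rw [this, Finset.prod_mul_distrib]
  simp

lemma term_eq {m σ : ℂ} (h : m + 1 = -σ) (θ : ℝ) (a : ℕ) (x : ℝ) (hs : -(a + 1 : ℝ) < σ.re)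
    (k : ℕ) :
    (-1 : ℂ) ^ (k + 1) *
          (∑ l ∈ Finset.Icc 1 (k + 1),
            cchoose (m + 1) (l + a) * (S1 (k + 1) l : ℂ) *
              (bernPoly (l + a) θ : ℂ)) /
        risingProd (x : ℂ) (k + 1) =
    (-1) ^ a * σ * (Complex.Gamma (σ + 1))⁻¹ *
      ((∑ i ∈ Finset.range (k + 1), (stirling1Unsigned (k + 1) (i + 1) : ℂ) *
      bb θ (a + 1 + i) * Complex.Gamma (σ + a + 1 + i)) / risingProd (x : ℂ) (k + 1)) := by
  rw [← mul_div_assoc]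
  congr 1
  have hr : Finset.Icc 1 (k + 1) = Finset.image (fun i => i + 1) (Finset.range (k + 1)) := by
    ext l
    simp only [Finset.mem_Icc, Finset.mem_image, Finset.mem_range]
    constructor
    · rintro ⟨h1, h2⟩
      exact ⟨l - 1, by omega, by omega⟩
    · rintro ⟨i, h1, rfl⟩
      omega
  rw [hr, Finset.sum_image (fun i _ j _ hij => by simpa using hij), Finset.mul_sum, Finset.mul_sum]
  refine Finset.sum_congr rfl fun i _ => ?_
  have hG : 0 < (σ + 1 + ((a + i : ℕ) : ℂ)).re := by
    have : (0 : ℝ) ≤ i := by positivity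
    simp; linarith
  have hp := GamInv hG
  rw [cchoose_eq h, show i + 1 + a = a + i + 1 by ring, hp, S1, bb,
    show a + 1 + i = a + i + 1 by ring,
    show σ + a + 1 + i = σ + 1 + ((a + i : ℕ) : ℂ) by push_cast; ring]
  have e : (-1 : ℂ) ^ (k + 1) * ((-1) ^ (a + i + 1) * (-1) ^ (k + 1 + (i + 1))) = (-1) ^ a := by
    rw [← pow_add, ← pow_add, show k + 1 + (a + i + 1 + (k + 1 + (i + 1))) =
      a + 2 * (k + i + 2) by ring, pow_add, pow_mul]
    simp
  rw [← e]
  push_cast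
  ring

open Finset in
/-- The extended generalized Faulhaber formula, balanced case `a = ⌊Re(m)+1⌋`
(formula (30) of Theorem 5.1). -/
theorem extended_generalized_faulhaber_balanced (m : ℂ) (hm : m ≠ -1)
    (hm1 : -1 ≤ m.re) (x : ℝ) (hx : 0 < x) :
    Summable (fun k : ℕ =>
      ‖(-1 : ℂ) ^ (k + 1) *
          (∑ l ∈ Icc 1 (k + 1),
            cchoose (m + 1) (l + ⌊m.re + 1⌋₊) * (S1 (k + 1) l : ℂ) *
              (bernPoly (l + ⌊m.re + 1⌋₊) (Int.fract x) : ℂ)) /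
        risingProd (x : ℂ) (k + 1)‖) ∧
    (∑ k ∈ Icc 1 ⌊x⌋₊, (k : ℂ) ^ m) =
      (x : ℂ) ^ (m + 1) / (m + 1) + riemannZeta (-m) +
        1 / (m + 1) *
          ∑ k ∈ Icc 1 ⌊m.re + 1⌋₊,
            (-1 : ℂ) ^ k * cchoose (m + 1) k * (bernPoly k (Int.fract x) : ℂ) *
              (x : ℂ) ^ (m - k + 1) +
        (-1 : ℂ) ^ (⌊m.re + 1⌋₊) * ((x : ℂ) ^ (m - (⌊m.re + 1⌋₊ : ℂ) + 1) / (m + 1)) *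
          ∑' k : ℕ,
            (-1 : ℂ) ^ (k + 1) *
                (∑ l ∈ Icc 1 (k + 1),
                  cchoose (m + 1) (l + ⌊m.re + 1⌋₊) * (S1 (k + 1) l : ℂ) *
                    (bernPoly (l + ⌊m.re + 1⌋₊) (Int.fract x) : ℂ)) /
              risingProd (x : ℂ) (k + 1) := by
  have hx0 : (x : ℂ) ≠ 0 := by exact_mod_cast hx.ne'
  set a := ⌊m.re + 1⌋₊ with ha
  set n := ⌊x⌋₊ with hn
  set θ := Int.fract x with hθd
  have hθ : θ ∈ Set.Ico (0 : ℝ) 1 := ⟨Int.fract_nonneg x, Int.fract_lt_one x⟩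
  have hxn : x = n + θ := by
    rw [hn, hθd, natCast_floor_eq_intCast_floor hx.le, Int.floor_add_fract]
  obtain ⟨σ, hσ⟩ : ∃ σ : ℂ, m + 1 = -σ := ⟨-(m + 1), by ring⟩
  have hσ0 : σ ≠ 0 := by
    rintro rfl
    exact hm (by linear_combination hσ)
  have hσre : -(a + 1 : ℝ) < σ.re := by
    have h1 := Nat.lt_floor_add_one (m.re + 1)
    have h2 := congrArg Complex.re hσ
    simp at h2
    rw [← ha] at h1
    linarith
  have hR := (RR_hasSum ⟨hθ.1, hθ.2.le⟩ a hx hσre).mul_left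
    ((-1) ^ a * σ * (Complex.Gamma (σ + 1))⁻¹)
  have hfun := funext fun k => term_eq hσ θ a x hσre k
  have hT : HasSum (fun k : ℕ => (-1 : ℂ) ^ (k + 1) *
          (∑ l ∈ Icc 1 (k + 1),
            cchoose (m + 1) (l + a) * (S1 (k + 1) l : ℂ) *
              (bernPoly (l + a) θ : ℂ)) /
        risingProd (x : ℂ) (k + 1)) ((-1) ^ a * σ * (Complex.Gamma (σ + 1))⁻¹ *
        ((x : ℂ) ^ (σ + a) * mellin (ff θ a x) σ)) := by
    rw [hfun]
    exact hR
  refine ⟨hT.summable.norm, ?_⟩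
  rw [hT.tsum_eq]
  have hid := ident hθ a n hx hxn hσre hσ0
  have hm' : m = -(σ + 1) := by linear_combination hσ
  have hsum : ∑ k ∈ Icc 1 n, (k : ℂ) ^ m =
      ∑ k ∈ Finset.range n, 1 / ((k : ℂ) + 1) ^ (σ + 1) := by
    rw [Finset.range_eq_Ico, Finset.sum_Ico_eq_sum_range, ← Finset.Ico_add_one_right_eq_Icc,
      Finset.sum_Ico_eq_sum_range]
    refine Finset.sum_congr (by simp) fun k _ => ?_
    rw [hm', Complex.cpow_neg, one_div]
    push_cast
    rw [zero_add, add_comm]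
  have hB : ∑ i ∈ Finset.range (a + 1), bb θ i * ((∏ r ∈ Finset.range i, (σ + r)) *
        (x : ℂ) ^ (-(σ + i))) = (x : ℂ) ^ (m + 1) + ∑ k ∈ Icc 1 a,
            (-1 : ℂ) ^ k * cchoose (m + 1) k * (bernPoly k θ : ℂ) *
              (x : ℂ) ^ (m - k + 1) := by
    rw [Finset.range_eq_Ico, Finset.sum_eq_sum_Ico_succ_bot (by omega),
      Finset.Ico_add_one_right_eq_Icc]
    congr 1
    · simp [bb, bernPoly, hσ]
    · refine Finset.sum_congr rfl fun k _ => ?_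
      rw [cchoose_eq hσ, bb, show m - k + 1 = -(σ + k) by linear_combination hσ]
      have e : (-1 : ℂ) ^ k * (-1) ^ k = 1 := by
        rw [← mul_pow]; simp
      linear_combination (-(∏ r ∈ Finset.range k, (σ + r)) * (x : ℂ) ^ (-(σ + k)) *
        (bernPoly k θ : ℂ) / (k.factorial : ℂ)) * e
  rw [hB] at hid
  rw [hsum]
  have hp : (x : ℂ) ^ (m - a + 1) * (x : ℂ) ^ (σ + a) = 1 := by
    rw [← Complex.cpow_add _ _ hx0, show m - a + 1 + (σ + a) = 0 by linear_combination hσ,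
      Complex.cpow_zero]
  have e : (-1 : ℂ) ^ a * (-1) ^ a = 1 := by
    rw [← mul_pow]; simp
  have hz : riemannZeta (-m) = riemannZeta (σ + 1) := by rw [hm', neg_neg]
  have hlast : (-1 : ℂ) ^ a * ((x : ℂ) ^ (m - (a : ℂ) + 1) / (m + 1)) *
      ((-1) ^ a * σ * (Complex.Gamma (σ + 1))⁻¹ *
        ((x : ℂ) ^ (σ + a) * mellin (ff θ a x) σ)) =
      -((Complex.Gamma (σ + 1))⁻¹ * mellin (ff θ a x) σ) := by
    calc _ = ((-1 : ℂ) ^ a * (-1) ^ a) * ((x : ℂ) ^ (m - (a : ℂ) + 1) * (x : ℂ) ^ (σ + a)) *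
        (σ / (m + 1)) * ((Complex.Gamma (σ + 1))⁻¹ * mellin (ff θ a x) σ) := by ring
      _ = _ := by
        rw [e, hp, hσ, div_neg, div_self hσ0]; ring
  rw [hlast, hz, hσ]
  rw [hσ] at hid
  rw [div_neg, div_neg]
  linear_combination -hid
end

section
/- Generalized Faulhaber formula for integer arguments with shift parameter: Let m ∈ ℂ with m ≠ −1, let n ∈ ℕ, and let a ∈ ℕ₀. Then the series ∑_{k=1}^{∞} (−1)^{k+a} (∑_{l=1}^{k} C(m+1, l+a) B_{l+a} S_k^{(1)}(l)) / ((n+1)(n+2)⋯(n+k)) converges absolutely, and ∑_{k=1}^{n} k^m = n^{m+1}/(m+1) + ζ(−m) + (1/(m+1)) ∑_{k=1}^{a} (−1)^k C(m+1, k) B_k n^{m−k+1} + (n^{m−a+1}/(m+1)) ∑_{k=1}^{∞} (−1)^{k+a} (∑_{l=1}^{k} C(m+1, l+a) B_{l+a} S_k^{(1)}(l)) / ((n+1)(n+2)⋯(n+k)). -/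
namespace FB
open Finset Complex

/-- rising factorial -/
noncomputable def rise (x : ℂ) (k : ℕ) : ℂ := ∏ i ∈ range k, (x + i)

/-- the frequencies -/
noncomputable def Lam (p : ℤ) : ℂ := 1 / (2 * Real.pi * I * p)

lemma rise_succ (x : ℂ) (k : ℕ) : rise x (k + 1) = rise x k * (x + k) := by
  simp [rise, prod_range_succ]

lemma st_gt : ∀ k l : ℕ, k < l → stirling1Unsigned k l = 0
  | 0, 0, h => by omega
  | 0, l + 1, _ => by simp [stirling1Unsigned]
  | k + 1, 0, h => by omega
  | k + 1, l + 1, h => by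
    simp [stirling1Unsigned, st_gt k l (by omega), st_gt k (l + 1) (by omega)]

lemma st_zero (k : ℕ) : stirling1Unsigned (k + 1) 0 = 0 := by
  induction k with
  | zero => simp [stirling1Unsigned]
  | succ k ih => rw [stirling1Unsigned, ih]; simp

lemma sum_st (c : ℕ → ℂ) (k : ℕ) :
    ∑ l ∈ range (k + 2), c l * (stirling1Unsigned (k + 1) l : ℂ) =
    ∑ l ∈ range (k + 1), c (l + 1) * (stirling1Unsigned k l : ℂ) +
      k * ∑ l ∈ range (k + 1), c l * (stirling1Unsigned k l : ℂ) := by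
  rw [sum_range_succ']
  have h : ∑ l ∈ range (k + 1), c l * (stirling1Unsigned k l : ℂ) =
      ∑ l ∈ range (k + 1), c (l + 1) * (stirling1Unsigned k (l + 1) : ℂ)
        + c 0 * (stirling1Unsigned k 0 : ℂ) := by
    rw [← sum_range_succ' (fun l => c l * (stirling1Unsigned k l : ℂ)), sum_range_succ _ (k + 1),
      st_gt k (k + 1) (by omega)]
    simp
  rw [h]
  simp only [stirling1Unsigned]
  push_cast
  rw [mul_add, mul_sum, ← add_assoc, ← sum_add_distrib]
  congr 1
  · apply sum_congr rfl; intros; ring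
  · ring

lemma rise_eq (x : ℂ) (k : ℕ) :
    ∑ l ∈ range (k + 1), x ^ l * (stirling1Unsigned k l : ℂ) = rise x k := by
  induction k with
  | zero => simp [rise, stirling1Unsigned]
  | succ k ih =>
    rw [sum_st, rise_succ, ← ih, mul_add, mul_comm _ (k : ℂ), add_left_inj, sum_mul]
    apply sum_congr rfl; intros; ring

lemma sum_Icc_eq (c : ℕ → ℂ) (k : ℕ) :
    ∑ l ∈ Icc 1 (k + 1), c l * (stirling1Unsigned (k + 1) l : ℂ) =
    ∑ l ∈ range (k + 2), c l * (stirling1Unsigned (k + 1) l : ℂ) := by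
  symm
  apply sum_subset_zero_on_sdiff (s₁ := Icc 1 (k + 1)) (s₂ := range (k + 2)) _ _ _ |>.symm
  · intro l; simp; omega
  · intro l hl
    simp at hl
    have : l = 0 := by omega
    subst this
    rw [st_zero]; simp
  · intros; rfl

/-- coefficients -/
noncomputable def cc (s : ℂ) (l : ℕ) : ℂ := rise (s - 1) l * ((bernoulli l : ℂ) / (l.factorial : ℂ))

/-- numerators -/
noncomputable def DD (a k : ℕ) (s : ℂ) : ℂ :=
  ∑ l ∈ range (k + 2), cc s (l + a) * (stirling1Unsigned (k + 1) l : ℂ)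

lemma DD_rec (a k : ℕ) (s : ℂ) : DD a (k + 1) s = DD (a + 1) k s + (k + 1) * DD a k s := by
  unfold DD
  rw [sum_st]
  push_cast
  congr 1
  apply sum_congr rfl; intros; congr 2; ring

lemma DD_zero (a : ℕ) (s : ℂ) : DD a 0 s = cc s (a + 1) := by
  simp [DD, sum_range_succ, stirling1Unsigned, add_comm]

lemma cc_eq (m : ℂ) (l : ℕ) : (-1) ^ l * cchoose (m + 1) l * (bernoulli l : ℂ) = cc (-m) l := by
  have : rise (-m - 1) l = (-1) ^ l * ∏ i ∈ range l, (m + 1 - i) := by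
    rw [rise, ← card_range l, ← prod_const, card_range, ← prod_mul_distrib]
    apply prod_congr rfl; intros; ring
  rw [cc, cchoose, this]
  ring

lemma term_eq (m : ℂ) (a k : ℕ) :
    (-1 : ℂ) ^ (k + 1 + a) *
          (∑ l ∈ Icc 1 (k + 1),
            cchoose (m + 1) (l + a) * (bernoulli (l + a) : ℂ) * (S1 (k + 1) l : ℂ)) =
      DD a k (-m) := by
  rw [DD, ← sum_Icc_eq (fun l => cc (-m) (l + a)), mul_sum]
  apply sum_congr rfl
  intro l _
  rw [← cc_eq, S1]
  push_cast
  have h : (-1 : ℂ) ^ (k + 1 + a) * (-1) ^ (k + 1 + l) = (-1) ^ (l + a) := by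
    rw [← pow_add, show k + 1 + a + (k + 1 + l) = 2 * (k + 1) + (l + a) by ring, pow_add, pow_mul]
    simp
  rw [← h]; ring

lemma risingProd_succ (n : ℂ) (k : ℕ) : risingProd n (k + 1) = risingProd n k * (n + k + 1) := by
  simp [risingProd, prod_range_succ]

lemma norm_risingProd (n k : ℕ) : ‖risingProd n k‖ = ∏ i ∈ range k, ((n : ℝ) + i + 1) := by
  rw [risingProd, norm_prod]
  apply prod_congr rfl
  intro i _
  have : ((n : ℂ) + i + 1) = (((n : ℝ) + i + 1 : ℝ) : ℂ) := by push_cast; rfl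
  rw [this, norm_real, Real.norm_of_nonneg (by positivity)]

lemma risingProd_ne (n k : ℕ) : risingProd n k ≠ 0 := by
  rw [← norm_pos_iff, norm_risingProd]
  positivity

lemma le_norm_risingProd (n k : ℕ) (hn : 1 ≤ n) : ((k + 1).factorial : ℝ) ≤ ‖risingProd n k‖ := by
  rw [norm_risingProd]
  have h1 : (1 : ℝ) ≤ n := by exact_mod_cast hn
  induction k with
  | zero => simp
  | succ k ih =>
    rw [prod_range_succ, Nat.factorial_succ]
    push_cast
    rw [mul_comm]
    apply mul_le_mul ih _ (by positivity) (by positivity)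
    linarith

lemma prod_bound (y : ℝ) (k : ℕ) :
    ∏ j ∈ range k, (1 + y ^ 2 / ((j : ℝ) + 1) ^ 2) ≤ Real.exp (Real.pi * |y|) := by
  rcases eq_or_ne y 0 with rfl | hy
  · simp
  have hmono : Monotone fun k => ∏ j ∈ range k, (1 + y ^ 2 / ((j : ℝ) + 1) ^ 2) := by
    apply monotone_nat_of_le_succ
    intro k
    rw [prod_range_succ]
    apply le_mul_of_one_le_right
    · exact prod_nonneg fun i _ => by positivity
    · have : 0 ≤ y ^ 2 / ((k : ℝ) + 1) ^ 2 := by positivity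
      linarith
  have hy' : 0 < |y| := abs_pos.mpr hy
  have ht := Complex.tendsto_euler_sin_prod (((|y| : ℝ) : ℂ) * I)
  have e1 : Complex.sin (Real.pi * (((|y| : ℝ) : ℂ) * I)) = ((Real.sinh (Real.pi * |y|) : ℝ) : ℂ) * I := by
    rw [← mul_assoc, Complex.sin_mul_I]; push_cast; rfl
  rw [e1] at ht
  have e2 : ∀ n : ℕ, (Real.pi * (((|y| : ℝ) : ℂ) * I) *
      ∏ j ∈ range n, (1 - (((|y| : ℝ) : ℂ) * I) ^ 2 / ((j : ℂ) + 1) ^ 2)) =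
      ((Real.pi * |y| * ∏ j ∈ range n, (1 + y ^ 2 / ((j : ℝ) + 1) ^ 2) : ℝ) : ℂ) * I := by
    intro n
    have : ∀ j : ℕ, (1 - (((|y| : ℝ) : ℂ) * I) ^ 2 / ((j : ℂ) + 1) ^ 2) =
      ((1 + y ^ 2 / ((j : ℝ) + 1) ^ 2 : ℝ) : ℂ) := by
      intro j
      rw [mul_pow, I_sq, ← ofReal_pow, sq_abs]
      push_cast; ring
    simp_rw [this]
    push_cast; ring
  simp_rw [e2] at ht
  have ht2 := ((Complex.continuous_im.tendsto _).comp ht)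
  simp only [Function.comp_def, mul_I_im, ofReal_re] at ht2
  have hm2 : Monotone fun k => Real.pi * |y| * ∏ j ∈ range k, (1 + y ^ 2 / ((j : ℝ) + 1) ^ 2) :=
    hmono.const_mul (by positivity)
  have h := hm2.ge_of_tendsto ht2 k
  have hs : Real.sinh (Real.pi * |y|) ≤ Real.pi * |y| * Real.exp (Real.pi * |y|) := by
    set t := Real.pi * |y|
    rw [Real.sinh_eq]
    have h1 := Real.add_one_le_exp (-(2 * t))
    have h2 : Real.exp (-t) = Real.exp t * Real.exp (-(2 * t)) := by
      rw [← Real.exp_add]; congr 1; ring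
    rw [h2]
    nlinarith [Real.exp_pos t]
  exact le_of_mul_le_mul_left (h.trans hs) (by positivity)

lemma rise_succ_left (b : ℂ) (k : ℕ) : rise b (k + 1) = b * ∏ j ∈ range k, (b + (j + 1)) := by
  rw [rise, prod_range_succ', mul_comm]; simp

lemma rise_bound (y : ℝ) (k : ℕ) :
    ‖rise (y * I) (k + 1)‖ ≤ |y| * k.factorial * Real.exp (Real.pi * |y|) := by
  rw [rise_succ_left, norm_mul, norm_mul, norm_I, mul_one, norm_real, Real.norm_eq_abs, mul_assoc]
  apply mul_le_mul_of_nonneg_left _ (abs_nonneg _)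
  refine le_trans ?_ (mul_le_mul_of_nonneg_left (prod_bound y k) (by positivity))
  rw [norm_prod, ← prod_range_add_one_eq_factorial]
  push_cast
  rw [← prod_mul_distrib]
  apply prod_le_prod
  · intros; positivity
  · intro j _
    have hj : (0 : ℝ) < (j : ℝ) + 1 := by positivity
    have : ‖(y : ℂ) * I + ((j : ℂ) + 1)‖ = Real.sqrt (((j : ℝ) + 1) ^ 2 + y ^ 2) := by
      rw [Complex.norm_def, normSq_apply]
      congr 1
      simp
      ring
    rw [this, Real.sqrt_le_left (by positivity)]
    have e : ((j : ℝ) + 1) ^ 2 + y ^ 2 = ((j : ℝ) + 1) ^ 2 * (1 + y ^ 2 / ((j : ℝ) + 1) ^ 2) := by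
      field_simp
    rw [e, mul_pow]
    apply mul_le_mul_of_nonneg_left _ (by positivity)
    have : 0 ≤ y ^ 2 / ((j : ℝ) + 1) ^ 2 := by positivity
    nlinarith

lemma Lam_eq (p : ℤ) : Lam p = ((-(1 / (2 * Real.pi * p)) : ℝ) : ℂ) * I := by
  rw [Lam]
  push_cast
  rcases eq_or_ne p 0 with rfl | hp
  · simp
  have : (p : ℂ) ≠ 0 := by exact_mod_cast hp
  have h2 : (Real.pi : ℂ) ≠ 0 := by exact_mod_cast Real.pi_ne_zero
  field_simp
  simp

lemma norm_Lam (p : ℤ) : ‖Lam p‖ = 1 / (2 * Real.pi * |(p : ℝ)|) := by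
  rw [Lam_eq, norm_mul, norm_I, mul_one, norm_real, norm_neg, Real.norm_eq_abs, abs_div, abs_mul, abs_one,
    abs_of_pos (show 0 < 2 * Real.pi by positivity)]

lemma norm_Lam_le (p : ℤ) : ‖Lam p‖ ≤ 1 / (2 * Real.pi) := by
  rw [norm_Lam]
  rcases eq_or_ne p 0 with rfl | hp
  · simp; positivity
  have : (1 : ℝ) ≤ |(p : ℝ)| := by exact_mod_cast Int.one_le_abs hp
  apply one_div_le_one_div_of_le (by positivity)
  have := Real.pi_pos
  nlinarith

lemma rise_Lam_bound (p : ℤ) (x : ℝ) (hx : 0 ≤ x) (k : ℕ) :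
    ‖rise (Lam p * x) (k + 1)‖ ≤ ‖Lam p‖ * x * k.factorial * Real.exp (x / 2) := by
  have e : Lam p * x = ((-(1 / (2 * Real.pi * p)) * x : ℝ) : ℂ) * I := by
    rw [Lam_eq]; push_cast; ring
  have hy : |-(1 / (2 * Real.pi * p)) * x| = ‖Lam p‖ * x := by
    rw [norm_Lam, abs_mul, abs_neg, abs_div, abs_mul, abs_one,
      abs_of_pos (show 0 < 2 * Real.pi by positivity), abs_of_nonneg hx]
  rw [e]
  refine (rise_bound _ _).trans ?_
  rw [hy]
  apply mul_le_mul_of_nonneg_left _ (by positivity)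
  apply Real.exp_le_exp.mpr
  have h := mul_le_mul_of_nonneg_right (norm_Lam_le p) hx
  have h2 := mul_le_mul_of_nonneg_left h Real.pi_pos.le
  refine h2.trans (le_of_eq ?_)
  have := Real.pi_ne_zero
  field_simp

lemma summable_Lam (j : ℕ) (hj : 2 ≤ j) : Summable fun p : ℤ => ‖Lam p‖ ^ j := by
  have h := Real.summable_one_div_int_pow.mpr (show 1 < j by omega)
  have h2 := (h.abs).mul_left ((1 / (2 * Real.pi)) ^ j)
  refine h2.congr fun p => ?_
  rw [norm_Lam, abs_div, abs_pow, abs_one]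
  rw [← one_div_pow, ← mul_pow]
  congr 1
  ring

lemma hasSum_bern (j : ℕ) (hj : 2 ≤ j) :
    HasSum (fun p : ℤ => -(Lam p) ^ j) ((bernoulli j : ℂ) / (j.factorial : ℂ)) := by
  have h := hasSum_one_div_pow_mul_fourier_mul_bernoulliFun hj (x := 0) (by simp)
  have h2 := h.mul_left (-(1 / (2 * Real.pi * I) ^ j))
  have hne : (2 * Real.pi * I : ℂ) ^ j ≠ 0 := pow_ne_zero _ (by simp [Real.pi_ne_zero])
  have e1 : (fun p : ℤ => -(1 / (2 * Real.pi * I) ^ j) * (1 / (p : ℂ) ^ j *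
      fourier p (((0 : ℝ) : UnitAddCircle)))) = fun p : ℤ => -(Lam p) ^ j := by
    ext p
    rw [show fourier p (((0 : ℝ) : UnitAddCircle)) = 1 by simp, Lam, one_div_pow, mul_pow _ (p : ℂ)]
    ring
  have e2 : -(1 / (2 * Real.pi * I) ^ j) * (-(2 * Real.pi * I) ^ j / (j.factorial : ℂ) *
      (bernoulliFun j 0 : ℂ)) = (bernoulli j : ℂ) / (j.factorial : ℂ) := by
    rw [bernoulliFun_eval_zero]
    push_cast
    field_simp
  rw [e1, e2] at h2
  exact h2

end FB

namespace FB
open Finset Complex MeasureTheory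

lemma rise_add (x : ℂ) (a l : ℕ) : rise x (a + l) = rise x a * rise (x + a) l := by
  simp only [rise, prod_range_add]
  congr 1
  apply prod_congr rfl
  intros; push_cast; ring

lemma Gamma_rise (w : ℂ) (hw : 0 < w.re) (l : ℕ) : Gamma (w + l) = Gamma w * rise w l := by
  induction l with
  | zero => simp [rise]
  | succ l ih =>
    have hne : w + l ≠ 0 := by
      intro h
      have := congrArg Complex.re h
      simp at this
      have h2 : (0 : ℝ) ≤ l := by positivity
      linarith
    push_cast
    rw [← add_assoc, Gamma_add_one _ hne, ih, rise_succ]; ring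

/-- the weight -/
noncomputable def wt (w : ℂ) (x : ℝ) : ℂ := (x : ℂ) ^ (w - 1) * (Real.exp (-x) : ℂ)

lemma wt_int (w : ℂ) (hw : 0 < w.re) : IntegrableOn (wt w) (Set.Ioi 0) := by
  have h := GammaIntegral_convergent hw
  refine h.congr_fun (fun x _ => ?_) measurableSet_Ioi
  simp only [wt]; ring

lemma wt_integral (w : ℂ) (hw : 0 < w.re) : ∫ x in Set.Ioi (0 : ℝ), wt w x = Gamma w := by
  rw [Gamma_eq_integral hw, GammaIntegral]
  refine setIntegral_congr_fun measurableSet_Ioi (fun x _ => ?_)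
  simp only [wt]; push_cast; ring

lemma wt_mul (w : ℂ) (l : ℕ) (x : ℝ) (hx : 0 < x) : wt w x * (x : ℂ) ^ l = wt (w + l) x := by
  have hx' : (x : ℂ) ≠ 0 := by exact_mod_cast hx.ne'
  rw [wt, wt, show w + l - 1 = (w - 1) + l by ring, cpow_add _ _ hx', cpow_natCast]; ring

lemma norm_wt (w : ℂ) (x : ℝ) (hx : 0 < x) : ‖wt w x‖ = x ^ (w.re - 1) * Real.exp (-x) := by
  rw [wt, norm_mul, norm_cpow_eq_rpow_re_of_pos hx, norm_real, Real.norm_of_nonneg (Real.exp_pos _).le]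
  simp

/-- the summand -/
noncomputable def Fk (w : ℂ) (p : ℤ) (k : ℕ) (x : ℝ) : ℂ := wt w x * rise (Lam p * x) (k + 1)

lemma Fk_eq (w : ℂ) (p : ℤ) (k : ℕ) (x : ℝ) (hx : 0 < x) : Fk w p k x =
    ∑ l ∈ range (k + 2), (Lam p ^ l * (stirling1Unsigned (k + 1) l : ℂ)) * wt (w + l) x := by
  rw [Fk, ← rise_eq, mul_sum]
  apply sum_congr rfl
  intro l _
  rw [← wt_mul w l x hx, mul_pow]; ring

lemma re_pos_add (w : ℂ) (hw : 0 < w.re) (l : ℕ) : 0 < (w + l).re := by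
  simp; positivity

lemma Fk_int (w : ℂ) (hw : 0 < w.re) (p : ℤ) (k : ℕ) : IntegrableOn (Fk w p k) (Set.Ioi 0) := by
  have : IntegrableOn (fun x : ℝ => ∑ l ∈ range (k + 2),
      (Lam p ^ l * (stirling1Unsigned (k + 1) l : ℂ)) * wt (w + l) x) (Set.Ioi 0) := by
    apply integrable_finsetSum
    intro l _
    exact (wt_int _ (re_pos_add w hw l)).const_mul _
  exact this.congr_fun (fun x hx => (Fk_eq w p k x hx).symm) measurableSet_Ioi

lemma Fk_integral (w : ℂ) (hw : 0 < w.re) (p : ℤ) (k : ℕ) : ∫ x in Set.Ioi (0 : ℝ), Fk w p k x =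
    ∑ l ∈ range (k + 2), (Lam p ^ l * (stirling1Unsigned (k + 1) l : ℂ)) * (Gamma w * rise w l) := by
  rw [setIntegral_congr_fun measurableSet_Ioi (fun x hx => Fk_eq w p k x hx), integral_finsetSum]
  · apply sum_congr rfl
    intro l _
    rw [integral_const_mul, wt_integral _ (re_pos_add w hw l), Gamma_rise w hw]
  · intro l _
    exact (wt_int _ (re_pos_add w hw l)).const_mul _

/-- the bound function -/
noncomputable def bd (s x : ℝ) : ℝ := x ^ (s + 1 - 1) * Real.exp (-((1 / 2) * x))

lemma bd_integral (s : ℝ) (hs : 0 < s) : ∫ x in Set.Ioi (0 : ℝ), bd s x = 2 ^ (s + 1) * Real.Gamma (s + 1) := by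
  have := Real.integral_rpow_mul_exp_neg_mul_Ioi (a := s + 1) (r := 1 / 2) (by linarith) (by norm_num)
  simp only [bd]
  rw [this]; norm_num

lemma bd_int (s : ℝ) (hs : 0 < s) : IntegrableOn (bd s) (Set.Ioi 0) := by
  apply Integrable.of_integral_ne_zero
  rw [bd_integral s hs]
  have : 0 < Real.Gamma (s + 1) := Real.Gamma_pos_of_pos (by linarith)
  positivity

lemma Fk_norm (w : ℂ) (p : ℤ) (k : ℕ) (x : ℝ) (hx : 0 < x) :
    ‖Fk w p k x‖ ≤ ‖Lam p‖ * k.factorial * bd w.re x := by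
  rw [Fk, norm_mul, norm_wt w x hx]
  refine (mul_le_mul_of_nonneg_left (rise_Lam_bound p x hx.le k) (by positivity)).trans (le_of_eq ?_)
  rw [bd, show w.re + 1 - 1 = (w.re - 1) + 1 by ring, Real.rpow_add hx, Real.rpow_one,
    show -(1 / 2 * x) = -x + x / 2 by ring, Real.exp_add]
  ring

lemma Fk_int_norm (w : ℂ) (hw : 0 < w.re) (p : ℤ) (k : ℕ) :
    ∫ x in Set.Ioi (0 : ℝ), ‖Fk w p k x‖ ≤
      ‖Lam p‖ * k.factorial * (2 ^ (w.re + 1) * Real.Gamma (w.re + 1)) := by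
  rw [← bd_integral _ hw, ← integral_const_mul]
  exact setIntegral_mono_on (Fk_int w hw p k).norm ((bd_int _ hw).const_mul _) measurableSet_Ioi
    (fun x hx => Fk_norm w p k x hx)

lemma hasSum_DD (a : ℕ) (ha : 1 ≤ a) (s : ℂ) (hw : 0 < (s - 1 + a).re) (k : ℕ) :
    HasSum (fun p : ℤ => -(rise (s - 1) a * Lam p ^ a * ∫ x in Set.Ioi (0 : ℝ), Fk (s - 1 + a) p k x))
      (Gamma (s - 1 + a) * DD a k s) := by
  have h : ∀ l ∈ range (k + 2), HasSum (fun p : ℤ => (Gamma (s - 1 + a) * rise (s - 1) (l + a) *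
      (stirling1Unsigned (k + 1) l : ℂ)) * (-(Lam p) ^ (l + a)))
      ((Gamma (s - 1 + a) * rise (s - 1) (l + a) * (stirling1Unsigned (k + 1) l : ℂ)) *
        ((bernoulli (l + a) : ℂ) / ((l + a).factorial : ℂ))) := by
    intro l _
    rcases Nat.eq_zero_or_pos l with rfl | hl
    · rw [st_zero]; simp
    · exact (hasSum_bern (l + a) (by omega)).mul_left _
  have h2 := hasSum_sum h
  have e1 : ∀ l, rise (s - 1) (l + a) = rise (s - 1) a * rise (s - 1 + a) l := by
    intro l; rw [add_comm l a, rise_add]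
  have e : Gamma (s - 1 + a) * DD a k s = ∑ l ∈ range (k + 2),
      (Gamma (s - 1 + a) * rise (s - 1) (l + a) * (stirling1Unsigned (k + 1) l : ℂ)) *
        ((bernoulli (l + a) : ℂ) / ((l + a).factorial : ℂ)) := by
    rw [DD, mul_sum]
    apply sum_congr rfl; intros; rw [cc]; ring
  rw [e]
  refine h2.congr_fun fun p => ?_
  rw [Fk_integral _ hw, mul_sum, ← sum_neg_distrib]
  apply sum_congr rfl
  intro l _
  rw [e1, pow_add]; ring

lemma DD_bound_aux (a : ℕ) (ha : 1 ≤ a) (s : ℂ) (hw : 0 < (s - 1 + a).re) (k : ℕ) :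
    ‖Gamma (s - 1 + a) * DD a k s‖ ≤ (‖rise (s - 1) a‖ *
      (2 ^ ((s - 1 + a).re + 1) * Real.Gamma ((s - 1 + a).re + 1)) * ∑' p, ‖Lam p‖ ^ (a + 1)) *
        k.factorial := by
  have hs := summable_Lam (a + 1) (by omega)
  have h1 : HasSum (fun p : ℤ => (‖rise (s - 1) a‖ * (2 ^ ((s - 1 + a).re + 1) *
      Real.Gamma ((s - 1 + a).re + 1)) * ‖Lam p‖ ^ (a + 1)) * k.factorial)
      ((‖rise (s - 1) a‖ *
      (2 ^ ((s - 1 + a).re + 1) * Real.Gamma ((s - 1 + a).re + 1)) * ∑' p, ‖Lam p‖ ^ (a + 1)) *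
        k.factorial) := (hs.hasSum.mul_left _).mul_right _
  refine (hasSum_DD a ha s hw k).norm_le_of_bounded h1 fun p => ?_
  rw [norm_neg, norm_mul, norm_mul, norm_pow]
  have h2 := (norm_integral_le_integral_norm _).trans (Fk_int_norm _ hw p k)
  refine (mul_le_mul_of_nonneg_left h2 (by positivity)).trans (le_of_eq ?_)
  rw [pow_succ]; ring

lemma DD_diff (a k : ℕ) : Differentiable ℂ (DD a k) := by
  unfold DD cc rise
  fun_prop

lemma DD_bound_large (R : ℝ) (a : ℕ) (hR : 0 ≤ R) (ha : R + 2 ≤ a) :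
    ∃ C : ℝ, 0 ≤ C ∧ ∀ s : ℂ, ‖s‖ ≤ R → ∀ k, ‖DD a k s‖ ≤ C * k.factorial := by
  have ha1 : 1 ≤ a := by
    have : (1 : ℝ) ≤ a := by linarith
    exact_mod_cast this
  have hre : ∀ s : ℂ, ‖s‖ ≤ R → 0 < (s - 1 + a).re := by
    intro s hs
    have := (abs_le.mp ((Complex.abs_re_le_norm s).trans hs)).1
    simp; linarith
  let f : ℂ → ℂ := fun s => (Gamma (s - 1 + a))⁻¹ * (((‖rise (s - 1) a‖ *
      (2 ^ ((s - 1 + a).re + 1) * Real.Gamma ((s - 1 + a).re + 1)) * ∑' p, ‖Lam p‖ ^ (a + 1)) : ℝ) : ℂ)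
  have hf : ContinuousOn f (Metric.closedBall 0 R) := by
    intro s hs
    have hp := hre s (by simpa using hs)
    apply ContinuousAt.continuousWithinAt
    have h1 : Gamma (s - 1 + a) ≠ 0 := Gamma_ne_zero_of_re_pos hp
    have h2 : ContinuousAt Gamma (s - 1 + a) := by
      apply (differentiableAt_Gamma _ _).continuousAt
      intro m h
      rw [h] at hp
      simp at hp
      have : (0 : ℝ) ≤ m := by positivity
      linarith
    have h3 : ContinuousAt Real.Gamma ((s - 1 + a).re + 1) := by
      apply (Real.differentiableAt_Gamma _).continuousAt
      intro m h
      have : (0 : ℝ) ≤ m := by positivity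
      linarith
    have h4 : ContinuousAt (fun s : ℂ => Gamma (s - 1 + a)) s :=
      ContinuousAt.comp (g := Gamma) (f := fun s : ℂ => s - 1 + a) h2 (by fun_prop)
    have h5 : ContinuousAt (fun s : ℂ => Real.Gamma ((s - 1 + a).re + 1)) s :=
      ContinuousAt.comp (g := Real.Gamma) (f := fun s : ℂ => (s - 1 + a).re + 1) h3 (by fun_prop)
    have h6 : Continuous (fun s : ℂ => rise (s - 1) a) := by unfold rise; fun_prop
    have h7 : Continuous (fun s : ℂ => (2 : ℝ) ^ ((s - 1 + a).re + 1)) :=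
      Continuous.rpow continuous_const (by fun_prop) (by intro; left; norm_num)
    apply (h4.inv₀ h1).mul
    apply Complex.continuous_ofReal.continuousAt.comp
    exact ((h6.norm.continuousAt).mul (h7.continuousAt.mul h5)).mul continuousAt_const
  obtain ⟨C, hC⟩ := (isCompact_closedBall (0 : ℂ) R).exists_bound_of_continuousOn hf
  have hC0 : 0 ≤ C := (norm_nonneg _).trans (hC 0 (by simpa using hR))
  refine ⟨C, hC0, fun s hs k => ?_⟩
  have hp := hre s hs
  have h1 : 0 < ‖Gamma (s - 1 + a)‖ := norm_pos_iff.mpr (Gamma_ne_zero_of_re_pos hp)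
  have h2 := DD_bound_aux a ha1 s hp k
  have h3 := hC s (by simpa using hs)
  simp only [f] at h3
  rw [norm_mul, norm_inv, norm_real] at h3
  rw [norm_mul] at h2
  have h4 := (Real.le_norm_self _).trans ((inv_mul_le_iff₀ h1).mp h3)
  have h5 := h2.trans (mul_le_mul_of_nonneg_right h4 (by positivity))
  rw [mul_assoc] at h5
  exact le_of_mul_le_mul_left h5 h1

lemma DD_bound_step (R : ℝ) (a : ℕ) (hR : 0 ≤ R)
    (h : ∃ C : ℝ, 0 ≤ C ∧ ∀ s : ℂ, ‖s‖ ≤ R → ∀ k, ‖DD (a + 1) k s‖ ≤ C * k.factorial * Real.sqrt (k + 1)) :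
    ∃ C : ℝ, 0 ≤ C ∧ ∀ s : ℂ, ‖s‖ ≤ R → ∀ k, ‖DD a k s‖ ≤ C * k.factorial * Real.sqrt (k + 1) := by
  obtain ⟨C, hC0, hC⟩ := h
  obtain ⟨C0, hC1⟩ := (isCompact_closedBall (0 : ℂ) R).exists_bound_of_continuousOn
    (DD_diff a 0).continuous.continuousOn
  have hC00 : 0 ≤ C0 := (norm_nonneg _).trans (hC1 0 (by simpa using hR))
  refine ⟨C0 + 3 * C, by positivity, fun s hs k => ?_⟩
  induction k with
  | zero =>
    have := hC1 s (by simpa using hs)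
    simp
    linarith
  | succ k ih =>
    rw [DD_rec]
    refine (norm_add_le _ _).trans ?_
    rw [norm_mul, Nat.factorial_succ]
    have hk : ‖((k : ℂ) + 1)‖ = (k : ℝ) + 1 := by
      rw [show ((k : ℂ) + 1) = (((k : ℝ) + 1 : ℝ) : ℂ) by push_cast; rfl, norm_real,
        Real.norm_of_nonneg (by positivity)]
    rw [hk]
    have h1 := hC s hs k
    push_cast
    set u := Real.sqrt ((k : ℝ) + 1)
    set v := Real.sqrt ((k : ℝ) + 1 + 1)
    have hu : u ^ 2 = (k : ℝ) + 1 := Real.sq_sqrt (by positivity)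
    have hv : v ^ 2 = (k : ℝ) + 1 + 1 := Real.sq_sqrt (by positivity)
    have hk0 : (0 : ℝ) ≤ k := by positivity
    have hu0 : 1 ≤ u := Real.one_le_sqrt.mpr (by linarith)
    have hv0 : 0 ≤ v := Real.sqrt_nonneg _
    have huv : u ≤ v := Real.sqrt_le_sqrt (by linarith)
    have hv2 : v ≤ 2 * u := by nlinarith
    -- key
    have key : u ≤ 3 * (v - u) * ((k : ℝ) + 1) := by
      rw [← hu]
      have : (v - u) * (v + u) = 1 := by nlinarith
      have h3 : 1 ≤ 3 * (v - u) * u := by nlinarith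
      nlinarith
    set f : ℝ := (k.factorial : ℝ)
    have hf : 0 ≤ f := by positivity
    calc _ ≤ C * f * u + ((k : ℝ) + 1) * ((C0 + 3 * C) * f * u) := by gcongr
      _ ≤ C * f * (3 * (v - u) * ((k : ℝ) + 1)) + ((k : ℝ) + 1) * (C0 * f * v + 3 * C * f * u) := by
          apply add_le_add
          · gcongr
          · have : C0 * f * u ≤ C0 * f * v := by gcongr
            have := mul_le_mul_of_nonneg_left this (by linarith : (0 : ℝ) ≤ (k : ℝ) + 1)
            nlinarith
      _ = _ := by ring

lemma DD_bound (R : ℝ) (hR : 0 ≤ R) (a : ℕ) :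
    ∃ C : ℝ, 0 ≤ C ∧ ∀ s : ℂ, ‖s‖ ≤ R → ∀ k, ‖DD a k s‖ ≤ C * k.factorial * Real.sqrt (k + 1) := by
  obtain ⟨N, hN⟩ := exists_nat_ge (R + 2)
  have main : ∀ j a : ℕ, N ≤ a + j →
      ∃ C : ℝ, 0 ≤ C ∧ ∀ s : ℂ, ‖s‖ ≤ R → ∀ k, ‖DD a k s‖ ≤ C * k.factorial * Real.sqrt (k + 1) := by
    intro j
    induction j with
    | zero =>
      intro a ha
      have h1 : (N : ℝ) ≤ a := by exact_mod_cast ha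
      obtain ⟨C, h0, h⟩ := DD_bound_large R a hR (hN.trans h1)
      refine ⟨C, h0, fun s hs k => (h s hs k).trans ?_⟩
      have hk0 : (0 : ℝ) ≤ k := by positivity
      exact le_mul_of_one_le_right (by positivity) (Real.one_le_sqrt.mpr (by linarith))
    | succ j ih =>
      intro a ha
      exact DD_bound_step R a hR (ih (a + 1) (by omega))
  exact main N a (by omega)

/-- terms -/
noncomputable def TT (a n k : ℕ) (s : ℂ) : ℂ := DD a k s / risingProd n (k + 1)

lemma TT_bound (R : ℝ) (hR : 0 ≤ R) (a n : ℕ) (hn : 1 ≤ n) :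
    ∃ C : ℝ, 0 ≤ C ∧ ∀ s : ℂ, ‖s‖ ≤ R → ∀ k, ‖TT a n k s‖ ≤ C * (1 / ((k : ℝ) + 1) ^ (3 / 2 : ℝ)) := by
  obtain ⟨C, h0, h⟩ := DD_bound R hR a
  refine ⟨C, h0, fun s hs k => ?_⟩
  rw [TT, norm_div]
  have h1 := h s hs k
  have h2 := le_norm_risingProd n (k + 1) hn
  have hf : (0 : ℝ) < (k.factorial : ℝ) := by positivity
  have h3 : (k.factorial : ℝ) * (k + 1) ^ 2 ≤ ‖risingProd n (k + 1)‖ := by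
    refine le_trans ?_ h2
    rw [Nat.factorial_succ, Nat.factorial_succ]
    push_cast
    have hk0 : (0 : ℝ) ≤ k := by positivity
    have : (k.factorial : ℝ) * (k + 1) ^ 2 = ((k : ℝ) + 1) * ((k + 1) * k.factorial) := by ring
    rw [this]
    gcongr
    linarith
  have hk : (0 : ℝ) < (k : ℝ) + 1 := by positivity
  calc _ ≤ (C * k.factorial * Real.sqrt (k + 1)) / ((k.factorial : ℝ) * (k + 1) ^ 2) := by gcongr
    _ = C * (1 / ((k : ℝ) + 1) ^ (3 / 2 : ℝ)) := by
      rw [Real.sqrt_eq_rpow]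
      have : ((k : ℝ) + 1) ^ 2 = ((k : ℝ) + 1) ^ (1 / 2 : ℝ) * ((k : ℝ) + 1) ^ (3 / 2 : ℝ) := by
        rw [← Real.rpow_add hk]; norm_num
      rw [this]
      have h4 : 0 < ((k : ℝ) + 1) ^ (1 / 2 : ℝ) := by positivity
      have h5 : 0 < ((k : ℝ) + 1) ^ (3 / 2 : ℝ) := by positivity
      field_simp

lemma summ_maj : Summable fun k : ℕ => 1 / ((k : ℝ) + 1) ^ (3 / 2 : ℝ) := by
  have := (summable_nat_add_iff 1).mpr (Real.summable_one_div_nat_rpow.mpr (show (1 : ℝ) < 3 / 2 by norm_num))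
  simpa using this

lemma TT_summable (a n : ℕ) (hn : 1 ≤ n) (s : ℂ) : Summable fun k => ‖TT a n k s‖ := by
  obtain ⟨C, _, h⟩ := TT_bound ‖s‖ (norm_nonneg _) a n hn
  exact Summable.of_nonneg_of_le (fun _ => norm_nonneg _) (h s le_rfl) (summ_maj.mul_left C)

lemma TT_diff (a n : ℕ) (hn : 1 ≤ n) : Differentiable ℂ fun s => ∑' k, TT a n k s := by
  intro s
  obtain ⟨C, _, h⟩ := TT_bound (‖s‖ + 1) (by positivity) a n hn
  have hd := differentiableOn_tsum_of_summable_norm (F := fun k s => TT a n k s)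
    (U := Metric.ball 0 (‖s‖ + 1)) (summ_maj.mul_left C)
    (fun k => ((DD_diff a k).div_const _).differentiableOn) Metric.isOpen_ball
    (fun k w hw => h w (by simpa using (Metric.mem_ball.mp hw).le) k)
  exact hd.differentiableAt (Metric.isOpen_ball.mem_nhds (by simp))

end FB

namespace FB
open Finset Complex MeasureTheory Filter Topology

/-- sums -/
noncomputable def SS (a n : ℕ) (s : ℂ) : ℂ := ∑' k, TT a n k s

lemma TT_hasSum (a n : ℕ) (hn : 1 ≤ n) (s : ℂ) : HasSum (fun k => TT a n k s) (SS a n s) :=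
  (TT_summable a n hn s).of_norm.hasSum

lemma TT_rec (a n k : ℕ) (s : ℂ) : TT (a + 1) n k s =
    (((k + 1 : ℕ) + 1 : ℂ) * TT a n (k + 1) s - ((k : ℂ) + 1) * TT a n k s) + n * TT a n (k + 1) s := by
  have h := DD_rec a k s
  have h1 := risingProd_succ n (k + 1)
  have h2 := risingProd_ne n (k + 1)
  have h3 := risingProd_ne n (k + 2)
  have h4 : ((n : ℂ) + ((k + 1 : ℕ) : ℂ) + 1) ≠ 0 := by
    intro h; rw [h] at h1; simp at h1; exact h3 h1
  have e : DD (a + 1) k s = DD a (k + 1) s - (k + 1) * DD a k s := by rw [h]; ring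
  rw [TT, TT, TT, e, h1]
  push_cast at h4 ⊢
  field_simp
  ring

lemma TT_lim (a n : ℕ) (hn : 1 ≤ n) (s : ℂ) :
    Tendsto (fun k : ℕ => ((k : ℂ) + 1) * TT a n k s) atTop (𝓝 0) := by
  obtain ⟨C, _, h⟩ := TT_bound ‖s‖ (norm_nonneg _) a n hn
  have ht : Tendsto (fun k : ℕ => C * (((k + 1 : ℕ) : ℝ)) ^ (-(1 / 2 : ℝ))) atTop (𝓝 0) := by
    have := ((tendsto_rpow_neg_atTop (show (0 : ℝ) < 1 / 2 by norm_num)).comp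
      (tendsto_natCast_atTop_atTop (R := ℝ))).comp (tendsto_add_atTop_nat 1)
    simpa [Function.comp_def] using this.const_mul C
  refine squeeze_zero_norm (fun k => ?_) ht
  rw [norm_mul]
  have hk : ‖((k : ℂ) + 1)‖ = (k : ℝ) + 1 := by
    rw [show ((k : ℂ) + 1) = (((k : ℝ) + 1 : ℝ) : ℂ) by push_cast; rfl, norm_real,
      Real.norm_of_nonneg (by positivity)]
  rw [hk]
  have hp : (0 : ℝ) < (k : ℝ) + 1 := by positivity
  refine (mul_le_mul_of_nonneg_left (h s le_rfl k) hp.le).trans (le_of_eq ?_)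
  push_cast
  rw [one_div, ← Real.rpow_neg hp.le]
  have : ((k : ℝ) + 1) ^ (-(1 / 2 : ℝ)) = ((k : ℝ) + 1) ^ (-(3 / 2 : ℝ)) * ((k : ℝ) + 1) := by
    rw [← Real.rpow_add_one hp.ne']; norm_num
  rw [this]; ring

lemma SS_rec (a n : ℕ) (hn : 1 ≤ n) (s : ℂ) : SS (a + 1) n s = n * SS a n s - cc s (a + 1) := by
  have h0 := TT_hasSum a n hn s
  have h1 : HasSum (fun k => TT a n (k + 1) s) (SS a n s - TT a n 0 s) := by
    have := (hasSum_nat_add_iff' 1).mpr h0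
    simpa using this
  have h2 := (TT_hasSum (a + 1) n hn s).sub (h1.mul_left (n : ℂ))
  have h3 := h2.tendsto_sum_nat
  have e : ∀ N : ℕ, ∑ k ∈ range N, (TT (a + 1) n k s - n * TT a n (k + 1) s) =
      ((N : ℂ) + 1) * TT a n N s - TT a n 0 s := by
    intro N
    have : ∀ k ∈ range N, (TT (a + 1) n k s - n * TT a n (k + 1) s) =
      (((k + 1 : ℕ) + 1 : ℂ) * TT a n (k + 1) s - ((k : ℂ) + 1) * TT a n k s) := by
      intro k _; rw [TT_rec]; ring
    rw [sum_congr rfl this, sum_range_sub (fun k : ℕ => ((k : ℂ) + 1) * TT a n k s)]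
    simp
  simp_rw [e] at h3
  have h4 := (TT_lim a n hn s).sub_const (TT a n 0 s)
  have h5 := tendsto_nhds_unique h3 h4
  have hn0 : ((n : ℂ) + 1) ≠ 0 := by exact_mod_cast Nat.succ_ne_zero n
  have h6 : TT a n 0 s * ((n : ℂ) + 1) = cc s (a + 1) := by
    rw [TT, DD_zero]; simp [risingProd]; field_simp
  rw [← h6]
  linear_combination h5

lemma gauss (n : ℕ) (hn : 1 ≤ n) (p : ℤ) (x : ℝ) (hx : 0 ≤ x) :
    HasSum (fun k => rise (Lam p * x) (k + 1) / risingProd n (k + 1))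
      (Lam p * x / (n - Lam p * x)) := by
  have hne : (n : ℂ) - Lam p * x ≠ 0 := by
    intro h
    have := congrArg Complex.re h
    rw [Lam_eq] at this
    simp at this
    omega
  have hb : ∀ k : ℕ, ‖rise (Lam p * x) (k + 1)‖ / ‖risingProd n k‖ ≤
      (‖Lam p‖ * x * Real.exp (x / 2)) * (1 / ((k : ℝ) + 1)) := by
    intro k
    have h1 := rise_Lam_bound p x hx k
    have h2 := le_norm_risingProd n k hn
    rw [Nat.factorial_succ] at h2
    push_cast at h2
    calc _ ≤ ‖Lam p‖ * x * k.factorial * Real.exp (x / 2) / (((k : ℝ) + 1) * k.factorial) := by gcongr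
      _ = _ := by
        have : (k.factorial : ℝ) ≠ 0 := by positivity
        field_simp
  have hb2 : ∀ k : ℕ, ‖rise (Lam p * x) (k + 1) / risingProd n (k + 1)‖ ≤
      (‖Lam p‖ * x * Real.exp (x / 2)) * (1 / (((k + 1 : ℕ) : ℝ)) ^ 2) := by
    intro k
    rw [norm_div, risingProd_succ, norm_mul, ← div_div]
    have hk : ‖((n : ℂ) + k + 1)‖ = (n : ℝ) + k + 1 := by
      rw [show ((n : ℂ) + k + 1) = (((n : ℝ) + k + 1 : ℝ) : ℂ) by push_cast; rfl, norm_real,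
        Real.norm_of_nonneg (by positivity)]
    rw [hk]
    calc _ ≤ (‖Lam p‖ * x * Real.exp (x / 2)) * (1 / ((k : ℝ) + 1)) / ((k : ℝ) + 1) := by
          apply div_le_div₀ (by positivity) (hb k) (by positivity)
          have : (0 : ℝ) ≤ n := by positivity
          linarith
      _ = _ := by push_cast; field_simp
  have hs : Summable (fun k => rise (Lam p * x) (k + 1) / risingProd n (k + 1)) := by
    apply Summable.of_norm_bounded _ hb2
    apply Summable.mul_left
    exact (summable_nat_add_iff 1).mpr (Real.summable_one_div_nat_pow.mpr (by norm_num : 1 < 2))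
  rw [hs.hasSum_iff_tendsto_nat]
  have e : ∀ N : ℕ, ∑ k ∈ range N, rise (Lam p * x) (k + 1) / risingProd n (k + 1) =
      (Lam p * x - rise (Lam p * x) (N + 1) / risingProd n N) / (n - Lam p * x) := by
    intro N
    induction N with
    | zero => simp [rise, risingProd]
    | succ N ih =>
      rw [sum_range_succ, ih, rise_succ _ (N + 1)]
      have h1 := risingProd_succ n N
      have h2 := risingProd_ne n N
      have h3 := risingProd_ne n (N + 1)
      have h4 : ((n : ℂ) + N + 1) ≠ 0 := by
        intro h; rw [h] at h1; simp at h1; exact h3 h1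
      rw [h1]
      push_cast
      field_simp
      ring
  simp_rw [e]
  have hz : Tendsto (fun N => rise (Lam p * x) (N + 1) / risingProd n N) atTop (𝓝 0) := by
    have ht := (tendsto_one_div_add_atTop_nhds_zero_nat (𝕜 := ℝ)).const_mul
      (‖Lam p‖ * x * Real.exp (x / 2))
    rw [mul_zero] at ht
    refine squeeze_zero_norm (fun k => ?_) ht
    rw [norm_div]; exact hb k
  simpa using (hz.const_sub (Lam p * x)).div_const ((n : ℂ) - Lam p * x)

lemma one_sub_Lam (p : ℤ) (y : ℝ) : 1 ≤ ‖1 - Lam p * y‖ := by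
  have := Complex.abs_re_le_norm (1 - Lam p * y)
  rw [Lam_eq] at this ⊢
  simpa using this

lemma cot_sum (y : ℝ) (hy : 0 < y) :
    ∑' p : ℤ, Lam p * (Lam p * y / (1 - Lam p * y)) =
      -(1 / (Complex.exp y - 1) - 1 / y + 1 / 2) := by
  have hyC : (y : ℂ) ≠ 0 := by exact_mod_cast hy.ne'
  have hpi : (Real.pi : ℂ) ≠ 0 := by exact_mod_cast Real.pi_ne_zero
  have hs : Summable fun p : ℤ => Lam p * (Lam p * y / (1 - Lam p * y)) := by
    apply Summable.of_norm_bounded ((summable_Lam 2 le_rfl).mul_right y)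
    intro p
    rw [norm_mul, norm_div, norm_mul, norm_real, Real.norm_of_nonneg hy.le, pow_two, mul_assoc]
    apply mul_le_mul_of_nonneg_left _ (norm_nonneg _)
    exact div_le_self (by positivity) (one_sub_Lam p y)
  have h1 := hs.hasSum.nat_add_neg
  have h0 : Lam 0 = 0 := by simp [Lam]
  rw [h0] at h1
  simp only [zero_mul, add_zero] at h1
  rw [← h1.tsum_eq, h1.summable.tsum_eq_zero_add]
  simp only [Nat.cast_zero, neg_zero, h0, zero_mul, add_zero, zero_add]
  set z : ℂ := I * y / (2 * Real.pi) with hz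
  have hzm : z ∈ Complex.integerComplement := by
    rw [Complex.mem_integerComplement_iff]
    rintro ⟨q, hq⟩
    have := congrArg Complex.im hq
    have e : z = ((y / (2 * Real.pi) : ℝ) : ℂ) * I := by rw [hz]; push_cast; ring
    rw [e, mul_I_im, ofReal_re, intCast_im] at this
    have h2 : 0 < y / (2 * Real.pi) := by positivity
    linarith
  have hc := cot_series_rep' hzm
  have e : ∀ k : ℕ, Lam ((k + 1 : ℕ) : ℤ) * (Lam ((k + 1 : ℕ) : ℤ) * y / (1 - Lam ((k + 1 : ℕ) : ℤ) * y)) +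
      Lam (-((k + 1 : ℕ) : ℤ)) * (Lam (-((k + 1 : ℕ) : ℤ)) * y / (1 - Lam (-((k + 1 : ℕ) : ℤ)) * y)) =
      (1 / (2 * Real.pi * I)) * (1 / (z - (k + 1)) + 1 / (z + (k + 1))) := by
    intro k
    have hk : ((k : ℂ) + 1) ≠ 0 := by exact_mod_cast Nat.succ_ne_zero k
    have g1 : (2 * Real.pi * I * ((k : ℂ) + 1) - y) ≠ 0 := by
      intro h
      have := congrArg Complex.re h
      simp at this
      exact hy.ne' this
    have g2 : (2 * Real.pi * I * ((k : ℂ) + 1) + y) ≠ 0 := by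
      intro h
      have := congrArg Complex.re h
      simp at this
      exact hy.ne' this
    have a1 : ∀ q : ℂ, q ≠ 0 → 2 * Real.pi * I * q - y ≠ 0 →
        (1 / (2 * Real.pi * I * q)) * ((1 / (2 * Real.pi * I * q)) * y / (1 - (1 / (2 * Real.pi * I * q)) * y)) =
        y / ((2 * Real.pi * I * q) * (2 * Real.pi * I * q - y)) := by
      intro q hq hq2
      have : 2 * Real.pi * I * q ≠ 0 := by simp [hpi, hq]
      set t := 2 * Real.pi * I * q
      have : 1 - 1 / t * y = (t - y) / t := by field_simp
      rw [this]
      field_simp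
    have a2 : z - (k + 1) = I * (2 * Real.pi * I * ((k : ℂ) + 1) + y) / (2 * Real.pi) := by
      rw [hz]; field_simp; linear_combination -(2 * Real.pi * ((k : ℂ) + 1)) * I_sq
    have a3 : z + (k + 1) = -I * (2 * Real.pi * I * ((k : ℂ) + 1) - y) / (2 * Real.pi) := by
      rw [hz]; field_simp; linear_combination (2 * Real.pi * ((k : ℂ) + 1)) * I_sq
    have b1 := a1 ((k : ℂ) + 1) hk g1
    have b2 := a1 (-((k : ℂ) + 1)) (neg_ne_zero.mpr hk) (by
      intro h; apply g2; linear_combination -h)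
    rw [Lam, Lam]
    push_cast
    have g3 : (2 * Real.pi * I * (-((k : ℂ) + 1)) - y) ≠ 0 := by
      intro h; apply g2; linear_combination -h
    rw [b1, b2, a2, a3]
    rw [show (2 * Real.pi * I * (-((k : ℂ) + 1)) - y) = -(2 * Real.pi * I * ((k : ℂ) + 1) + y) by ring]
    field_simp
    ring_nf
    simp only [I_sq]
    ring
  rw [tsum_congr e, tsum_mul_left, ← hc, Complex.cot_eq_exp_ratio]
  have e2 : 2 * I * (Real.pi * z) = -(y : ℂ) := by
    rw [hz]; field_simp; exact I_sq
  rw [e2, Complex.exp_neg]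
  have hE : Complex.exp y ≠ 0 := Complex.exp_ne_zero _
  have hE1 : Complex.exp y - 1 ≠ 0 := by
    rw [← Complex.ofReal_exp]
    have : Real.exp y - 1 ≠ 0 := by
      have := Real.add_one_lt_exp hy.ne'
      linarith
    exact_mod_cast this
  set E := Complex.exp y
  have e3 : (E⁻¹ + 1) / (I * (1 - E⁻¹)) = (1 + E) / (I * (E - 1)) := by
    rw [show E⁻¹ + 1 = (1 + E) * E⁻¹ by field_simp, show I * (1 - E⁻¹) = I * (E - 1) * E⁻¹ by field_simp,
      mul_div_mul_right _ _ (inv_ne_zero hE)]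
  rw [e3, hz]
  field_simp
  ring_nf
  simp only [I_sq]
  ring

end FB

namespace FB
open Finset Complex MeasureTheory Filter Topology

lemma fact_ratio (n : ℕ) (hn : 1 ≤ n) (k : ℕ) :
    (k.factorial : ℝ) / ‖risingProd n (k + 1)‖ ≤ 1 / ((k + 1 : ℕ) : ℝ) ^ 2 := by
  have h2 := le_norm_risingProd n (k + 1) hn
  have h3 : (k.factorial : ℝ) * (k + 1) ^ 2 ≤ ‖risingProd n (k + 1)‖ := by
    refine le_trans ?_ h2
    rw [Nat.factorial_succ, Nat.factorial_succ]
    push_cast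
    have : (k.factorial : ℝ) * (k + 1) ^ 2 = ((k : ℝ) + 1) * ((k + 1) * k.factorial) := by ring
    rw [this]
    gcongr
    linarith
  have hf : (0 : ℝ) < (k.factorial : ℝ) := by positivity
  calc _ ≤ (k.factorial : ℝ) / ((k.factorial : ℝ) * (k + 1) ^ 2) := by gcongr
    _ = _ := by push_cast; field_simp

lemma summ_pair (K : ℝ) : Summable fun i : ℕ × ℤ => (1 / ((i.1 + 1 : ℕ) : ℝ) ^ 2 * ‖Lam i.2‖ ^ 2) * K := by
  apply Summable.mul_right
  have h1 : Summable fun k : ℕ => 1 / ((k + 1 : ℕ) : ℝ) ^ 2 :=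
    (summable_nat_add_iff 1).mpr (Real.summable_one_div_nat_pow.mpr (by norm_num : 1 < 2))
  exact h1.mul_of_nonneg (summable_Lam 2 le_rfl) (fun _ => by positivity) (fun _ => by positivity)

/-- double family -/
noncomputable def GG (n : ℕ) (s : ℂ) (i : ℕ × ℤ) (x : ℝ) : ℂ :=
  (-((s - 1) * Lam i.2 / risingProd n (i.1 + 1))) * Fk s i.2 i.1 x

lemma coef_norm (n : ℕ) (s : ℂ) (k : ℕ) (p : ℤ) : ‖-((s - 1) * Lam p / risingProd n (k + 1))‖ =
    ‖s - 1‖ * ‖Lam p‖ / ‖risingProd n (k + 1)‖ := by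
  rw [norm_neg, norm_div, norm_mul]

lemma coef_bound (n : ℕ) (hn : 1 ≤ n) (s : ℂ) (k : ℕ) (p : ℤ) (K : ℝ) (hK : 0 ≤ K) :
    ‖s - 1‖ * ‖Lam p‖ / ‖risingProd n (k + 1)‖ * (‖Lam p‖ * k.factorial * K) ≤
      (1 / ((k + 1 : ℕ) : ℝ) ^ 2 * ‖Lam p‖ ^ 2) * (‖s - 1‖ * K) := by
  calc _ = ((k.factorial : ℝ) / ‖risingProd n (k + 1)‖) * (‖Lam p‖ ^ 2 * (‖s - 1‖ * K)) := by ring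
    _ ≤ (1 / ((k + 1 : ℕ) : ℝ) ^ 2) * (‖Lam p‖ ^ 2 * (‖s - 1‖ * K)) :=
      mul_le_mul_of_nonneg_right (fact_ratio n hn k) (by positivity)
    _ = _ := by ring

lemma bd_nonneg (s x : ℝ) (hx : 0 < x) : 0 ≤ bd s x := by unfold bd; positivity

lemma GG_tsum (n : ℕ) (hn : 1 ≤ n) (s : ℂ) (x : ℝ) (hx : 0 < x) :
    ∑' i, GG n s i x = (s - 1) * (wt s x * (1 / (Complex.exp ((x / n : ℝ) : ℂ) - 1))
      - n * wt (s - 1) x + 1 / 2 * wt s x) := by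
  have hs : Summable fun i => GG n s i x := by
    apply Summable.of_norm_bounded (summ_pair (‖s - 1‖ * bd s.re x))
    rintro ⟨k, p⟩
    rw [GG, norm_mul, coef_norm]
    exact (mul_le_mul_of_nonneg_left (Fk_norm s p k x hx) (by positivity)).trans
      (coef_bound n hn s k p _ (bd_nonneg _ _ hx))
  have hn0 : (n : ℂ) ≠ 0 := by exact_mod_cast (by omega : n ≠ 0)
  have hnR : (0 : ℝ) < n := by exact_mod_cast hn
  have hx0 : (x : ℂ) ≠ 0 := by exact_mod_cast hx.ne'
  rw [hs.tsum_prod]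
  rw [← Summable.tsum_comm (f := fun k p => GG n s (k, p) x) hs]
  have e : ∀ p : ℤ, ∑' k, GG n s (k, p) x = (-(s - 1) * wt s x) *
      (Lam p * (Lam p * ((x / n : ℝ) : ℂ) / (1 - Lam p * ((x / n : ℝ) : ℂ)))) := by
    intro p
    have h := (gauss n hn p x hx.le).mul_left (-(s - 1) * wt s x * Lam p)
    have e1 : ∀ k, GG n s (k, p) x = -(s - 1) * wt s x * Lam p *
        (rise (Lam p * x) (k + 1) / risingProd n (k + 1)) := by
      intro k; simp only [GG, Fk]; ring
    rw [tsum_congr e1, h.tsum_eq]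
    have h1 : (1 - Lam p * ((x / n : ℝ) : ℂ)) = (n - Lam p * x) / n := by
      push_cast; field_simp
    rw [h1]
    push_cast
    field_simp
  rw [tsum_congr e, tsum_mul_left, cot_sum _ (by positivity)]
  have hw : wt s x = wt (s - 1) x * x := by
    have := wt_mul (s - 1) 1 x hx
    simp at this
    exact this.symm
  rw [hw]
  push_cast
  field_simp

lemma GG_hasSum (n : ℕ) (hn : 1 ≤ n) (s : ℂ) (hs : 1 < s.re) :
    HasSum (fun i => ∫ x in Set.Ioi (0 : ℝ), GG n s i x)
      (∫ x in Set.Ioi (0 : ℝ), ∑' i, GG n s i x) := by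
  have h0 : 0 < s.re := by linarith
  apply hasSum_integral_of_summable_integral_norm
  · rintro ⟨k, p⟩
    exact (Fk_int s h0 p k).const_mul _
  · have hG : 0 < Real.Gamma (s.re + 1) := Real.Gamma_pos_of_pos (by linarith)
    apply Summable.of_nonneg_of_le (fun i => integral_nonneg fun _ => norm_nonneg _) _
      (summ_pair (‖s - 1‖ * (2 ^ (s.re + 1) * Real.Gamma (s.re + 1))))
    rintro ⟨k, p⟩
    simp only [GG, norm_mul]
    rw [integral_const_mul, coef_norm]
    exact (mul_le_mul_of_nonneg_left (Fk_int_norm s h0 p k) (by positivity)).trans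
      (coef_bound n hn s k p _ (by positivity))

lemma SS_integral (n : ℕ) (hn : 1 ≤ n) (s : ℂ) (hs : 1 < s.re) :
    Gamma s * SS 1 n s = ∫ x in Set.Ioi (0 : ℝ), ∑' i, GG n s i x := by
  have h := (GG_hasSum n hn s hs).prod_fiberwise (g := fun k => Gamma s * TT 1 n k s) ?_
  · exact ((TT_hasSum 1 n hn s).mul_left (Gamma s)).unique h
  · intro k
    have hw : s - 1 + ((1 : ℕ) : ℂ) = s := by push_cast; ring
    have h1 := hasSum_DD 1 le_rfl s (by rw [hw]; linarith) k
    rw [hw] at h1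
    have h2 := h1.mul_right (1 / risingProd n (k + 1))
    have e : Gamma s * TT 1 n k s = Gamma s * DD 1 k s * (1 / risingProd n (k + 1)) := by
      rw [TT]; ring
    rw [e]
    refine h2.congr_fun fun p => ?_
    simp only [GG]
    rw [integral_const_mul]
    simp [rise]
    ring

lemma zeta_part (n : ℕ) (hn : 1 ≤ n) (s : ℂ) (hs : 1 < s.re) :
    IntegrableOn (fun x : ℝ => wt s x * (1 / (Complex.exp ((x / n : ℝ) : ℂ) - 1))) (Set.Ioi 0) ∧
    HasSum (fun i : ℕ => Gamma s * (n : ℂ) ^ s * (1 / ((i + n : ℕ) + 1 : ℂ) ^ s))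
      (∫ x in Set.Ioi (0 : ℝ), wt s x * (1 / (Complex.exp ((x / n : ℝ) : ℂ) - 1))) := by
  have hnR : (0 : ℝ) < n := by exact_mod_cast hn
  have hn0 : (n : ℂ) ≠ 0 := by exact_mod_cast (by omega : n ≠ 0)
  constructor
  · have h1 := ((wt_int (s - 1) (by simp; linarith)).norm).const_mul (n : ℝ)
    refine Integrable.mono' h1 ?_ ?_
    · apply Measurable.aestronglyMeasurable
      unfold wt
      fun_prop
    · refine (ae_restrict_iff' measurableSet_Ioi).mpr (Eventually.of_forall fun x hx => ?_)
      have hx : 0 < x := hx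
      have hw : wt s x = wt (s - 1) x * x := by
        have := wt_mul (s - 1) 1 x hx
        simp at this
        exact this.symm
      have h2 : x / n ≤ Real.exp (x / n) - 1 := by
        have := Real.add_one_le_exp (x / n)
        linarith
      have hp : 0 < x / n := by positivity
      have e : (1 / (Complex.exp ((x / n : ℝ) : ℂ) - 1)) = ((1 / (Real.exp (x / n) - 1) : ℝ) : ℂ) := by
        push_cast; rfl
      rw [e, hw, norm_mul, norm_mul, norm_real, norm_real, Real.norm_of_nonneg hx.le,
        Real.norm_of_nonneg (one_div_pos.mpr (hp.trans_le h2)).le]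
      have h3 : 1 / (Real.exp (x / n) - 1) ≤ 1 / (x / n) := one_div_le_one_div_of_le hp h2
      calc _ ≤ ‖wt (s - 1) x‖ * x * (1 / (x / n)) := by gcongr
        _ = _ := by field_simp
  · have h := hasSum_mellin (ι := ℕ) (a := fun _ => 1) (p := fun i => ((i + n : ℕ) + 1 : ℝ) / n)
      (F := fun t => (Real.exp (-t) : ℂ) * (1 / (Complex.exp ((t / n : ℝ) : ℂ) - 1))) (s := s)
      (fun i => Or.inr (by positivity)) (by linarith) ?_ ?_
    · have e : mellin (fun t => (Real.exp (-t) : ℂ) * (1 / (Complex.exp ((t / n : ℝ) : ℂ) - 1))) s =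
          ∫ x in Set.Ioi (0 : ℝ), wt s x * (1 / (Complex.exp ((x / n : ℝ) : ℂ) - 1)) := by
        rw [mellin]
        congr 1
        ext x
        simp only [wt, smul_eq_mul]; ring
      rw [e] at h
      refine h.congr_fun fun i => ?_
      have : (((((i + n : ℕ) + 1 : ℝ) / n : ℝ)) : ℂ) ^ s = ((i + n : ℕ) + 1 : ℂ) ^ s / (n : ℂ) ^ s := by
        rw [Complex.ofReal_div, div_eq_mul_inv, ← Complex.ofReal_inv, mul_cpow_ofReal_nonneg (by positivity) (by positivity)]
        rw [Complex.ofReal_inv, Complex.inv_cpow]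
        · push_cast; rfl
        · rw [ofReal_natCast, natCast_arg]; exact Real.pi_pos.ne
      rw [this]
      have h3 : (n : ℂ) ^ s ≠ 0 := by simp [cpow_eq_zero_iff, hn0]
      have h4 : ((i + n : ℕ) + 1 : ℂ) ^ s ≠ 0 := by
        rw [Ne, cpow_eq_zero_iff, not_and_or]; left; exact_mod_cast Nat.succ_ne_zero (i + n)
      field_simp
    · intro t ht
      have ht : 0 < t := ht
      have hr : Real.exp (-(t / n)) < 1 := by
        rw [Real.exp_lt_one_iff]; simp; positivity
      have hg := (hasSum_geometric_of_lt_one (Real.exp_pos _).le hr).mul_left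
        (Real.exp (-t) * Real.exp (-(t / n)))
      have hg2 := Complex.hasSum_ofReal.mpr hg
      have e : ((Real.exp (-t) * Real.exp (-(t / n)) * (1 - Real.exp (-(t / n)))⁻¹ : ℝ) : ℂ) =
          (Real.exp (-t) : ℂ) * (1 / (Complex.exp ((t / n : ℝ) : ℂ) - 1)) := by
        rw [← Complex.ofReal_exp]
        norm_cast
        rw [Real.exp_neg (t / n), mul_assoc]
        congr 1
        have hp : 0 < t / n := by positivity
        have h2 : Real.exp (t / n) - 1 ≠ 0 := by
          have := Real.add_one_lt_exp hp.ne'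
          linarith
        have h3 := (Real.exp_pos (t / n)).ne'
        rw [show (1 - (Real.exp (t / n))⁻¹) = (Real.exp (t / n) - 1) / Real.exp (t / n) by field_simp]
        field_simp
      rw [e] at hg2
      refine hg2.congr_fun fun i => ?_
      rw [one_mul, ← Real.exp_nat_mul, ← Real.exp_add, ← Real.exp_add]
      congr 2
      push_cast
      field_simp
      ring
    · have h1 := (summable_nat_add_iff (n + 1)).mpr (Real.summable_one_div_nat_rpow.mpr hs)
      refine (h1.mul_left ((n : ℝ) ^ s.re)).congr fun i => ?_
      rw [Real.div_rpow (by positivity) hnR.le]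
      have h5 : 0 < (n : ℝ) ^ s.re := by positivity
      simp
      rw [← add_assoc, div_eq_mul_inv]

lemma SS_val (n : ℕ) (hn : 1 ≤ n) (s : ℂ) (hs : 1 < s.re) :
    SS 1 n s = (s - 1) * ((n : ℂ) ^ s * (∑' i : ℕ, 1 / ((i + n : ℕ) + 1 : ℂ) ^ s)) - n + (s - 1) / 2 := by
  have h0 : 0 < s.re := by linarith
  have hG : Gamma s ≠ 0 := Gamma_ne_zero_of_re_pos h0
  have h := SS_integral n hn s hs
  rw [setIntegral_congr_fun measurableSet_Ioi (fun x hx => GG_tsum n hn s x hx)] at h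
  obtain ⟨hi, hv⟩ := zeta_part n hn s hs
  have h1 : 0 < (s - 1).re := by simp; linarith
  have hsub : IntegrableOn (fun x : ℝ => wt s x * (1 / (Complex.exp ((x / n : ℝ) : ℂ) - 1)) -
      n * wt (s - 1) x) (Set.Ioi 0) := hi.sub ((wt_int _ h1).const_mul _)
  rw [integral_const_mul, integral_add hsub ((wt_int _ h0).const_mul _),
    integral_sub hi ((wt_int _ h1).const_mul _), integral_const_mul, integral_const_mul,
    wt_integral _ h0, wt_integral _ h1, ← hv.tsum_eq, tsum_mul_left] at h
  have hg : Gamma s = (s - 1) * Gamma (s - 1) := by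
    have := Gamma_add_one (s - 1) (by intro h; rw [h] at h1; simp at h1)
    simpa using this
  apply mul_left_cancel₀ hG
  rw [h]
  linear_combination (n : ℂ) * hg

/-- right hand side -/
noncomputable def RHS (a n : ℕ) (s : ℂ) : ℂ :=
  (n : ℂ) ^ (1 - s) / (1 - s) + riemannZeta s +
    1 / (1 - s) * ∑ k ∈ Icc 1 a, cc s k * (n : ℂ) ^ (1 - s - k) +
    (n : ℂ) ^ (1 - s - a) / (1 - s) * SS a n s

lemma RHS_succ (a n : ℕ) (hn : 1 ≤ n) (s : ℂ) : RHS (a + 1) n s = RHS a n s := by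
  have hn0 : (n : ℂ) ≠ 0 := by exact_mod_cast (by omega : n ≠ 0)
  rw [RHS, RHS, SS_rec a n hn, sum_Icc_succ_top (by omega)]
  have : (n : ℂ) ^ (1 - s - a) = (n : ℂ) ^ (1 - s - (a + 1 : ℕ)) * n := by
    rw [show 1 - s - (a : ℂ) = (1 - s - (a + 1 : ℕ)) + 1 by push_cast; ring, cpow_add _ _ hn0, cpow_one]
  rw [this]; ring

lemma RHS_eq (a n : ℕ) (hn : 1 ≤ n) (s : ℂ) : RHS a n s = RHS 1 n s := by
  have : ∀ a, RHS a n s = RHS 0 n s := by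
    intro a
    induction a with
    | zero => rfl
    | succ a ih => rw [RHS_succ a n hn, ih]
  rw [this a, this 1]

lemma main_re (n : ℕ) (hn : 1 ≤ n) (s : ℂ) (hs : 1 < s.re) :
    ∑ k ∈ Icc 1 n, (k : ℂ) ^ (-s) = RHS 1 n s := by
  have hn0 : (n : ℂ) ≠ 0 := by exact_mod_cast (by omega : n ≠ 0)
  have hs1 : 1 - s ≠ 0 := by
    intro h
    have : s = 1 := by linear_combination -h
    rw [this] at hs; simp at hs
  rw [RHS, SS_val n hn s hs, zeta_eq_tsum_one_div_nat_add_one_cpow hs]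
  have hsum : Summable fun k : ℕ => 1 / ((k : ℂ) + 1) ^ s := by
    have := (summable_nat_add_iff 1).mpr (Complex.summable_one_div_nat_cpow.mpr hs)
    simpa using this
  rw [← hsum.sum_add_tsum_nat_add n]
  have e1 : ∑ k ∈ Icc 1 n, (k : ℂ) ^ (-s) = ∑ k ∈ range n, 1 / ((k : ℂ) + 1) ^ s := by
    have : ∀ N : ℕ, ∑ k ∈ Icc 1 N, (k : ℂ) ^ (-s) = ∑ k ∈ range N, 1 / ((k : ℂ) + 1) ^ s := by
      intro N
      induction N with
      | zero => simp
      | succ N ih =>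
        rw [sum_Icc_succ_top (by omega), ih, sum_range_succ, cpow_neg]
        simp
    exact this n
  rw [e1]
  set A := ∑ k ∈ range n, 1 / ((k : ℂ) + 1) ^ s
  set B := ∑' i : ℕ, 1 / ((i + n : ℕ) + 1 : ℂ) ^ s
  have hc : cc s 1 = -(s - 1) / 2 := by
    simp [cc, rise]; ring
  have h1 : (n : ℂ) ^ (1 - s) = n * (n : ℂ) ^ (-s) := by
    rw [show 1 - s = 1 + (-s) by ring, cpow_add _ _ hn0, cpow_one]
  have h2 : (n : ℂ) ^ (-s) * (n : ℂ) ^ s = 1 := by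
    rw [← cpow_add _ _ hn0]; simp
  have h3 : 1 - s - ((1 : ℕ) : ℂ) = -s := by push_cast; ring
  simp only [Icc_self, sum_singleton]
  rw [hc, h3, h1]
  set P := (n : ℂ) ^ (-s)
  set Q := (n : ℂ) ^ s
  field_simp
  linear_combination 2 * B * (1 - s) * h2

lemma main_all (n : ℕ) (hn : 1 ≤ n) (s : ℂ) (hs : s ≠ 1) :
    ∑ k ∈ Icc 1 n, (k : ℂ) ^ (-s) = RHS 1 n s := by
  have hn0 : (n : ℂ) ≠ 0 := by exact_mod_cast (by omega : n ≠ 0)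
  have ho : IsOpen ({1}ᶜ : Set ℂ) := isOpen_compl_singleton
  have hf : DifferentiableOn ℂ (fun s : ℂ => ∑ k ∈ Icc 1 n, (k : ℂ) ^ (-s)) {1}ᶜ := by
    apply Differentiable.differentiableOn
    apply Differentiable.fun_sum
    intro k hk
    have hk0 : (k : ℂ) ≠ 0 := by
      have := (mem_Icc.mp hk).1
      exact_mod_cast (by omega : k ≠ 0)
    exact (differentiable_id.neg).const_cpow (Or.inl hk0)
  have hg : DifferentiableOn ℂ (RHS 1 n) {1}ᶜ := by
    intro s hs
    have hs' : s ≠ 1 := hs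
    have h1 : 1 - s ≠ 0 := sub_ne_zero.mpr hs'.symm
    apply DifferentiableAt.differentiableWithinAt
    have hz := differentiableAt_riemannZeta hs'
    have hS := TT_diff 1 n hn s
    have hS' : DifferentiableAt ℂ (fun s => SS 1 n s) s := hS
    have hc1 : DifferentiableAt ℂ (fun s : ℂ => (n : ℂ) ^ (1 - s)) s :=
      DifferentiableAt.const_cpow (by fun_prop) (Or.inl hn0)
    have hc2 : DifferentiableAt ℂ (fun s : ℂ => (n : ℂ) ^ (1 - s - (1 : ℕ))) s :=
      DifferentiableAt.const_cpow (by fun_prop) (Or.inl hn0)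
    have hc3 : DifferentiableAt ℂ (fun s : ℂ => cc s 1) s := by
      unfold cc rise; fun_prop
    have hd : DifferentiableAt ℂ (fun s : ℂ => 1 - s) s := by fun_prop
    unfold RHS
    simp only [Icc_self, sum_singleton]
    exact (((hc1.div hd h1).add hz).add (((differentiableAt_const 1).div hd h1).mul (hc3.mul hc2))).add
      ((hc2.div hd h1).mul hS')
  have hfa := hf.analyticOnNhd ho
  have hga := hg.analyticOnNhd ho
  have hpre : IsPreconnected ({1}ᶜ : Set ℂ) :=
    (isConnected_compl_singleton_of_one_lt_rank (by simp) 1).isPreconnected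
  refine hfa.eqOn_of_preconnected_of_eventuallyEq hga hpre (z₀ := 2) (by simp) ?_ hs
  have : {z : ℂ | 1 < z.re} ∈ 𝓝 (2 : ℂ) :=
    (isOpen_lt continuous_const Complex.continuous_re).mem_nhds (by simp)
  filter_upwards [this] with z hz
  exact main_re n hn z hz

end FB
open Finset in
/-- Generalized Faulhaber formula for integer arguments with shift parameter
(formula (36) of Corollary 5.2). -/
theorem generalized_faulhaber_nat_shift (m : ℂ) (hm : m ≠ -1)
    (n : ℕ) (hn : 1 ≤ n) (a : ℕ) :
    Summable (fun k : ℕ =>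
      ‖(-1 : ℂ) ^ (k + 1 + a) *
          (∑ l ∈ Icc 1 (k + 1),
            cchoose (m + 1) (l + a) * (bernoulli (l + a) : ℂ) * (S1 (k + 1) l : ℂ)) /
        risingProd (n : ℂ) (k + 1)‖) ∧
    (∑ k ∈ Icc 1 n, (k : ℂ) ^ m) =
      (n : ℂ) ^ (m + 1) / (m + 1) + riemannZeta (-m) +
        1 / (m + 1) *
          ∑ k ∈ Icc 1 a,
            (-1 : ℂ) ^ k * cchoose (m + 1) k * (bernoulli k : ℂ) * (n : ℂ) ^ (m - k + 1) +
        (n : ℂ) ^ (m - a + 1) / (m + 1) *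
          ∑' k : ℕ,
            (-1 : ℂ) ^ (k + 1 + a) *
                (∑ l ∈ Icc 1 (k + 1),
                  cchoose (m + 1) (l + a) * (bernoulli (l + a) : ℂ) * (S1 (k + 1) l : ℂ)) /
              risingProd (n : ℂ) (k + 1) := by
  simp_rw [FB.term_eq]
  refine ⟨FB.TT_summable a n hn (-m), ?_⟩
  have h := FB.main_all n hn (-m) (by intro h; apply hm; linear_combination -h)
  rw [← FB.RHS_eq a n hn, FB.RHS, neg_neg] at h
  rw [h]
  simp_rw [FB.cc_eq]
  have e1 : 1 - -m = m + 1 := by ring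
  have e2 : ∀ k : ℕ, m + 1 - (k : ℂ) = m - k + 1 := by intro k; ring
  simp_rw [e1, e2]
  rfl
end
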